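/- There exists a constant c > 0 such that for every integer n ≥ 2, every set S of n points in the plane in general position, and any two trees T, T' ∈ 𝒯(S), the tree T can be transformed into T' by a sequence of at most c·n·log n empty-triangle rotations. -/

import Mathlib

open scoped Classical

noncomputable section

/-- Points in the plane. -/
abbrev Pt : Type := ℝ × ℝ

/-- The closed straight-line segment spanned by an (unordered) edge. -/
def segOf (e : Sym2 Pt) : Set Pt :=
  Sym2.lift ⟨fun p q => segment ℝ p q, fun p q => segment_symm ℝ p q⟩ e

/-- The set of endpoints of an edge. -/
def epts (e : Sym2 Pt) : Set Pt := {p | p ∈ e}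

/-- Two edges intersect in at most common endpoints (they do not cross). -/
def NoCrossPair (e f : Sym2 Pt) : Prop := segOf e ∩ segOf f ⊆ epts e ∩ epts f

/-- A set of edges is noncrossing: any two distinct edges meet in at most a common endpoint. -/
def NoCross (E : Finset (Sym2 Pt)) : Prop := ∀ e ∈ E, ∀ f ∈ E, e ≠ f → NoCrossPair e f

/-- `E` is the edge set of a noncrossing straight-line spanning tree on the point set `S`:
all edges are nondegenerate with endpoints in `S`, pairwise noncrossing, there are
`|S| - 1` of them, and they connect all of `S`. -/
def IsPST (S : Finset Pt) (E : Finset (Sym2 Pt)) : Prop :=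
  (∀ e ∈ E, ¬ e.IsDiag ∧ ∀ p ∈ e, p ∈ S) ∧
  NoCross E ∧ E.card + 1 = S.card ∧
  ∀ p ∈ S, ∀ q ∈ S, Relation.ReflTransGen (fun a b => s(a, b) ∈ E) p q

/-- `S` is in general position: no three of its points are collinear. -/
def GenPos (S : Finset Pt) : Prop :=
  ∀ p ∈ S, ∀ q ∈ S, ∀ r ∈ S, p ≠ q → p ≠ r → q ≠ r → ¬ Collinear ℝ ({p, q, r} : Set Pt)

/-- `S` is in convex position: every point of `S` is a vertex of the convex hull of `S`. -/
def ConvexPos (S : Finset Pt) : Prop :=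
  ∀ p ∈ S, p ∉ convexHull ℝ ((S : Set Pt) \ {p})

/-- The open interior of the triangle with vertices `p`, `q`, `r`. -/
def triInt (p q r : Pt) : Set Pt := interior (convexHull ℝ ({p, q, r} : Set Pt))

/-- `y` can be reached from `x` by a sequence of at most `m` `step`-operations. -/
def ReachesIn {α : Type*} (step : α → α → Prop) (m : ℕ) (x y : α) : Prop :=
  ∃ k ≤ m, ∃ f : ℕ → α, f 0 = x ∧ f k = y ∧ ∀ i < k, step (f i) (f (i + 1))

/-- A simultaneous rotation from `E₁` to `E₂`: a bijection `π` between the removed and the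
inserted edges such that each `e` shares an endpoint with `π e` and `π e` crosses no edge
of `E₁`. -/
def SimRotation (S : Finset Pt) (E₁ E₂ : Finset (Sym2 Pt)) : Prop :=
  IsPST S E₁ ∧ IsPST S E₂ ∧ ∃ π : Sym2 Pt → Sym2 Pt,
    Set.BijOn π ↑(E₁ \ E₂) ↑(E₂ \ E₁) ∧
    ∀ e ∈ E₁ \ E₂, (∃ p, p ∈ e ∧ p ∈ π e) ∧ ∀ f ∈ E₁, NoCrossPair (π e) f

/-- An empty-triangle rotation replaces an edge `pq` by an adjacent edge `pr` such that
no edge of either tree meets the interior of the triangle `pqr`. -/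
def EmptyTriRot (S : Finset Pt) (E₁ E₂ : Finset (Sym2 Pt)) : Prop :=
  IsPST S E₁ ∧ IsPST S E₂ ∧ ∃ p q r : Pt,
    E₁ \ E₂ = {s(p, q)} ∧ E₂ \ E₁ = {s(p, r)} ∧
    ∀ g ∈ E₁ ∪ E₂, Disjoint (segOf g) (triInt p q r)

/-- A simultaneous empty-triangle rotation. -/
def SimEmptyTriRot (S : Finset Pt) (E₁ E₂ : Finset (Sym2 Pt)) : Prop :=
  IsPST S E₁ ∧ IsPST S E₂ ∧ ∃ π : Sym2 Pt → Sym2 Pt,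
    Set.BijOn π ↑(E₁ \ E₂) ↑(E₂ \ E₁) ∧
    ∀ e ∈ E₁ \ E₂, ∃ p q r : Pt, e = s(p, q) ∧ π e = s(p, r) ∧
      ∀ g ∈ E₁ ∪ E₂, Disjoint (segOf g) (triInt p q r)

/-- An edge slide replaces `pq` by `pr`, where `qr` is an edge of both trees and no edge of
either tree meets the interior of the triangle `pqr`. -/
def EdgeSlide (S : Finset Pt) (E₁ E₂ : Finset (Sym2 Pt)) : Prop :=
  IsPST S E₁ ∧ IsPST S E₂ ∧ ∃ p q r : Pt,
    E₁ \ E₂ = {s(p, q)} ∧ E₂ \ E₁ = {s(p, r)} ∧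
    s(q, r) ∈ E₁ ∧ s(q, r) ∈ E₂ ∧
    ∀ g ∈ E₁ ∪ E₂, Disjoint (segOf g) (triInt p q r)

/-- A simultaneous edge slide. -/
def SimEdgeSlide (S : Finset Pt) (E₁ E₂ : Finset (Sym2 Pt)) : Prop :=
  IsPST S E₁ ∧ IsPST S E₂ ∧ ∃ π : Sym2 Pt → Sym2 Pt,
    Set.BijOn π ↑(E₁ \ E₂) ↑(E₂ \ E₁) ∧
    ∀ e ∈ E₁ \ E₂, ∃ p q r : Pt, e = s(p, q) ∧ π e = s(p, r) ∧
      s(q, r) ∈ E₁ ∧ s(q, r) ∈ E₂ ∧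
      ∀ g ∈ E₁ ∪ E₂, Disjoint (segOf g) (triInt p q r)

/-- `e` is an edge of the convex hull of `S`: it joins two distinct points of `S` and its
segment lies on the boundary of the convex hull of `S`. -/
def IsHullEdge (S : Finset Pt) (e : Sym2 Pt) : Prop :=
  ∃ u v : Pt, e = s(u, v) ∧ u ∈ S ∧ v ∈ S ∧ u ≠ v ∧
    segment ℝ u v ⊆ frontier (convexHull ℝ (S : Set Pt))

/-- The spanning star centered at `v`. -/
def starAt (S : Finset Pt) (v : Pt) : Finset (Sym2 Pt) := (S.erase v).image (fun w => s(v, w))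

/-- An edge-labeled tree: an edge set together with a labeling function. -/
abbrev LTree := Finset (Sym2 Pt) × (Sym2 Pt → ℕ)

/-- `T` is an edge-labeled noncrossing straight-line spanning tree on `S`: its edge set is in
`𝒯(S)` and its labeling is a bijection from the edges onto `{1, …, |S| - 1}`
(normalized to `0` on non-edges). -/
def IsLabeledPST (S : Finset Pt) (T : LTree) : Prop :=
  IsPST S T.1 ∧ Set.BijOn T.2 ↑T.1 (Set.Icc 1 (S.card - 1)) ∧ ∀ e, e ∉ T.1 → T.2 e = 0

/-- A simultaneous exchange on edge-labeled trees: an arbitrary bijection between removed and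
inserted edges transferring labels, all common edges keeping their labels. -/
def LabSimExchange (S : Finset Pt) (T₁ T₂ : LTree) : Prop :=
  IsLabeledPST S T₁ ∧ IsLabeledPST S T₂ ∧ ∃ π : Sym2 Pt → Sym2 Pt,
    Set.BijOn π ↑(T₁.1 \ T₂.1) ↑(T₂.1 \ T₁.1) ∧
    (∀ e ∈ T₁.1 \ T₂.1, T₂.2 (π e) = T₁.2 e) ∧
    ∀ e ∈ T₁.1 ∩ T₂.1, T₂.2 e = T₁.2 e

/-- A rotation on edge-labeled trees: the removed and inserted edges share an endpoint and do
not cross, the label of the removed edge is transferred, and all other labels are kept. -/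
def LabRotation (S : Finset Pt) (T₁ T₂ : LTree) : Prop :=
  IsLabeledPST S T₁ ∧ IsLabeledPST S T₂ ∧ ∃ e₁ e₂ : Sym2 Pt,
    T₁.1 \ T₂.1 = {e₁} ∧ T₂.1 \ T₁.1 = {e₂} ∧
    (∃ p, p ∈ e₁ ∧ p ∈ e₂) ∧ NoCrossPair e₁ e₂ ∧
    T₂.2 e₂ = T₁.2 e₁ ∧ ∀ e ∈ T₁.1 ∩ T₂.1, T₂.2 e = T₁.2 e

/-- An edge slide on edge-labeled trees, transferring the label of the slid edge. -/
def LabEdgeSlide (S : Finset Pt) (T₁ T₂ : LTree) : Prop :=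
  IsLabeledPST S T₁ ∧ IsLabeledPST S T₂ ∧ ∃ p q r : Pt,
    T₁.1 \ T₂.1 = {s(p, q)} ∧ T₂.1 \ T₁.1 = {s(p, r)} ∧
    s(q, r) ∈ T₁.1 ∧ s(q, r) ∈ T₂.1 ∧
    (∀ g ∈ T₁.1 ∪ T₂.1, Disjoint (segOf g) (triInt p q r)) ∧
    T₂.2 (s(p, r)) = T₁.2 (s(p, q)) ∧ ∀ e ∈ T₁.1 ∩ T₂.1, T₂.2 e = T₁.2 e

/-!
Choose a line cutting `S` into halves, the *split*, and call the topmost segment on `S` across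
it the *bridge*; it is an edge of the convex hull, so it crosses nothing. Extend a given tree to
a maximal noncrossing edge set `M`. The lowest tree edge across the split other than the bridge
is a side of an empty triangle of `M` lying above it, and rotating over that triangle replaces it
by an edge that either crosses the split higher up or does not cross it at all. Every edge of `M`
across the split is used at most once, and there are at most `2n` of them: charge each one to
the vertex of its triangle that lies between the other two in the direction across the split, and
note that a point is charged at most once from above and once from below. So `2n` rotations lead
to a tree whose only edge across the split is the bridge. Such a tree is the union of the bridge
and of one tree on each half, and rotations inside a half are rotations of the whole, whence the
recursion `f(n) ≤ 2n + f(⌊n/2⌋) + f(⌈n/2⌉)`.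
-/

section AffineFunctionals

variable {E : Type*} [NormedAddCommGroup E] [NormedSpace ℝ E]

theorem pos_of_mem_segment (f : E →ᵃ[ℝ] ℝ) {a b w : E} (ha : 0 < f a) (hb : 0 < f b)
    (hw : w ∈ segment ℝ a b) : 0 < f w :=
  ((convex_Ioi (0 : ℝ)).affine_preimage f).segment_subset ha hb hw

theorem pos_or_pos_of_mem_segment (f : E →ᵃ[ℝ] ℝ) {a b w : E} (hw : w ∈ segment ℝ a b)
    (hpos : 0 < f w) : 0 < f a ∨ 0 < f b := by
  by_contra! h
  exact hpos.not_ge (((convex_Iic (0 : ℝ)).affine_preimage f).segment_subset h.1 h.2 hw)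

variable [FiniteDimensional ℝ E]

theorem exists_mem_segment_nonneg_and_eq_zero (f g : E →ᵃ[ℝ] ℝ) {w s : E} (hfw : 0 < f w)
    (hgw : 0 < g w) (hs : ¬(0 < f s ∧ 0 < g s)) :
    ∃ v ∈ segment ℝ w s, 0 ≤ f v ∧ 0 ≤ g v ∧ (f v = 0 ∨ g v = 0) := by
  have hcont : Continuous fun x ↦ min (f x) (g x) :=
    f.continuous_of_finiteDimensional.min g.continuous_of_finiteDimensional
  have hzero : (0 : ℝ) ∈ Set.Icc (min (f s) (g s)) (min (f w) (g w)) :=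
    ⟨not_lt.1 fun h ↦ hs (lt_min_iff.1 h), (lt_min hfw hgw).le⟩
  obtain ⟨v, hv, hmin⟩ := (convex_segment w s).isPreconnected.intermediate_value
    (right_mem_segment ℝ w s) (left_mem_segment ℝ w s) hcont.continuousOn hzero
  refine ⟨v, hv, hmin.ge.trans (min_le_left _ _), hmin.ge.trans (min_le_right _ _), ?_⟩
  exact (min_choice (f v) (g v)).imp (fun h ↦ h.symm.trans hmin) fun h ↦ h.symm.trans hmin

theorem pos_of_mem_interior_convexHull (f : E →ᵃ[ℝ] ℝ) {s : Set E} (hs : ∀ a ∈ s, 0 ≤ f a)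
    {a w : E} (ha : f a ≠ 0) (hw : w ∈ interior (convexHull ℝ s)) : 0 < f w := by
  have hnonneg : convexHull ℝ s ⊆ f ⁻¹' Set.Ici 0 :=
    convexHull_min hs ((convex_Ici 0).affine_preimage f)
  rcases eq_or_ne f.linear 0 with hconst | hlin
  · have hfw : f w = f a := by
      rw [← sub_eq_zero, ← vsub_eq_sub, ← f.linearMap_vsub, hconst, LinearMap.zero_apply]
    exact (hnonneg (interior_subset hw)).lt_of_ne (hfw ▸ ha.symm)
  · have hopen : IsOpenMap f := AffineMap.isOpenMap_linear_iff.1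
      (f.linear.isOpenMap_of_finiteDimensional (LinearMap.surjective hlin))
    have := interior_mono hnonneg hw
    rwa [← hopen.preimage_interior_eq_interior_preimage f.continuous_of_finiteDimensional,
      interior_Ici] at this

end AffineFunctionals

section Orientation

/-- Twice the signed area of the triangle `a b c`, as an affine function of `c`: positive exactly
when `c` lies to the left of the line from `a` to `b`. -/
def ori (a b : Pt) : Pt →ᵃ[ℝ] ℝ :=
  ((b.1 - a.1) • LinearMap.snd ℝ ℝ ℝ - (b.2 - a.2) • LinearMap.fst ℝ ℝ ℝ).toAffineMap +
    AffineMap.const ℝ Pt ((b.2 - a.2) * a.1 - (b.1 - a.1) * a.2)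

theorem ori_apply (a b c : Pt) :
    ori a b c = (b.1 - a.1) * (c.2 - a.2) - (b.2 - a.2) * (c.1 - a.1) := by
  simp only [ori, AffineMap.coe_add, Pi.add_apply, LinearMap.coe_toAffineMap, LinearMap.sub_apply,
    LinearMap.smul_apply, LinearMap.snd_apply, LinearMap.fst_apply, smul_eq_mul,
    AffineMap.const_apply]
  ring

theorem ori_combo (a b : Pt) {c d : Pt} {x y : ℝ} (hxy : x + y = 1) :
    ori a b (x • c + y • d) = x * ori a b c + y * ori a b d :=
  Convex.combo_affine_apply hxy

@[simp] theorem ori_self_left (a b : Pt) : ori a b a = 0 := by simp only [ori_apply]; ring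

@[simp] theorem ori_self_right (a b : Pt) : ori a b b = 0 := by simp only [ori_apply]; ring

theorem ori_rotate (a b c : Pt) : ori b c a = ori a b c := by simp only [ori_apply]; ring

theorem ori_swap (a b c : Pt) : ori b a c = -ori a b c := by simp only [ori_apply]; ring

theorem ori_add_ori_add_ori (a b c w : Pt) : ori b c w + ori c a w + ori a b w = ori a b c := by
  simp only [ori_apply]; ring

theorem ori_smul_add_ori_smul_add_ori_smul (a b c w : Pt) :
    ori b c w • a + ori c a w • b + ori a b w • c = ori a b c • w := by
  ext <;> simp [ori_apply] <;> ring

theorem ori_eq_zero_of_mem_segment {a b w : Pt} (hw : w ∈ segment ℝ a b) : ori a b w = 0 := by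
  obtain ⟨x, y, -, -, hxy, rfl⟩ := hw
  simp [ori_combo _ _ hxy]

theorem collinear_of_ori_eq_zero {a b c : Pt} (hab : a ≠ b) (h : ori a b c = 0) :
    Collinear ℝ ({a, b, c} : Set Pt) := by
  set d := b - a with hd
  set N := d.1 ^ 2 + d.2 ^ 2 with hN
  have hN0 : N ≠ 0 := fun h0 ↦ hab <| by
    have h1 : d.1 = 0 := by nlinarith [sq_nonneg d.1, sq_nonneg d.2]
    have h2 : d.2 = 0 := by nlinarith [sq_nonneg d.1, sq_nonneg d.2]
    exact (sub_eq_zero.1 (Prod.ext h1 h2 : d = 0)).symm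
  have hc : c = ((d.1 * (c.1 - a.1) + d.2 * (c.2 - a.2)) / N) • d + a := by
    rw [ori_apply] at h
    ext <;> simp only [Prod.fst_add, Prod.snd_add, Prod.smul_fst, Prod.smul_snd, smul_eq_mul] <;>
      field_simp <;> simp only [hN, hd, Prod.fst_sub, Prod.snd_sub]
    · linear_combination (-(b.2 - a.2)) * h
    · linear_combination (b.1 - a.1) * h
  rw [collinear_iff_of_mem (p₀ := a) (by simp)]
  refine ⟨d, ?_⟩
  rintro x (rfl | rfl | rfl)
  exacts [⟨0, by simp⟩, ⟨1, by simp [hd]⟩, ⟨_, hc⟩]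

theorem GenPos.eq_or_eq_of_ori_eq_zero {S : Finset Pt} (hS : GenPos S) {a b c : Pt} (ha : a ∈ S)
    (hb : b ∈ S) (hc : c ∈ S) (hab : a ≠ b) (h : ori a b c = 0) : c = a ∨ c = b := by
  by_contra! hne
  exact hS a ha b hb c hc hab hne.1.symm hne.2.symm (collinear_of_ori_eq_zero hab h)

end Orientation

section TriangleInterior

theorem triInt_swap_left (p q r : Pt) : triInt q p r = triInt p q r := by
  rw [triInt, triInt, Set.insert_comm]

theorem triInt_swap_right (p q r : Pt) : triInt p r q = triInt p q r := by
  rw [triInt, triInt, Set.pair_comm]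

theorem pos_of_mem_triInt (f : Pt →ᵃ[ℝ] ℝ) {p q r a w : Pt} (hp : 0 ≤ f p) (hq : 0 ≤ f q)
    (hr : 0 ≤ f r) (ha : f a ≠ 0) (hw : w ∈ triInt p q r) : 0 < f w := by
  refine pos_of_mem_interior_convexHull f ?_ ha hw
  rintro _ (rfl | rfl | rfl) <;> assumption

theorem mem_triInt_of_ori_pos {p q r w : Pt} (hpq : 0 < ori p q w) (hqr : 0 < ori q r w)
    (hrp : 0 < ori r p w) : w ∈ triInt p q r := by
  have hopen : IsOpen {v : Pt | 0 < ori p q v ∧ 0 < ori q r v ∧ 0 < ori r p v} := by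
    refine .and ?_ (.and ?_ ?_) <;>
      exact isOpen_lt continuous_const (ori _ _).continuous_of_finiteDimensional
  refine interior_maximal ?_ hopen ⟨hpq, hqr, hrp⟩
  rintro v ⟨hr, hp, hq⟩
  have hsum := ori_add_ori_add_ori p q r v
  have hpos : 0 < ori p q r := by linarith
  have hmem := (convex_convexHull ℝ {p, q, r}).centerMass_mem (t := Finset.univ)
    (w := ![ori q r v, ori r p v, ori p q v]) (z := ![p, q, r])
    (by simp [Fin.forall_fin_succ, hr.le, hp.le, hq.le])
    (by simpa [Fin.sum_univ_three, hsum] using hpos)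
    (fun i _ ↦ subset_convexHull ℝ _ (by fin_cases i <;> simp))
  simpa [Finset.centerMass, Fin.sum_univ_three, hsum, hpos.ne',
    ori_smul_add_ori_smul_add_ori_smul, smul_smul] using hmem

theorem mem_triInt_of_mem_openSegment {a b v x w : Pt} (habv : ori a b v ≠ 0)
    (hx : x ∈ openSegment ℝ a b) (hw : w ∈ openSegment ℝ x v) : w ∈ triInt a b v := by
  wlog hpos : 0 < ori a b v generalizing a b
  · rw [← triInt_swap_left]
    refine this (by rwa [ori_swap, neg_ne_zero]) (by rwa [openSegment_symm]) ?_
    rw [ori_swap]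
    exact neg_pos.2 (habv.lt_of_le (not_lt.1 hpos))
  obtain ⟨s, t, hs, ht, hst, rfl⟩ := hx
  obtain ⟨y, z, hy, hz, hyz, rfl⟩ := hw
  have hrot : ori b v a = ori a b v := ori_rotate a b v
  have hrot' : ori v a b = ori a b v := by rw [← ori_rotate v a b]
  refine mem_triInt_of_ori_pos ?_ ?_ ?_ <;>
    simp only [ori_combo _ _ hst, ori_combo _ _ hyz, ori_self_left, ori_self_right, hrot, hrot',
      mul_zero, zero_add, add_zero] <;> positivity

end TriangleInterior

section PlaneGraph

theorem NoCrossPair.symm {e f : Sym2 Pt} (h : NoCrossPair e f) : NoCrossPair f e :=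
  fun _ hw ↦ (h hw.symm).symm

theorem mem_segOf_of_mem {e : Sym2 Pt} {p : Pt} (hp : p ∈ e) : p ∈ segOf e := by
  obtain ⟨q, rfl⟩ := hp
  exact left_mem_segment ℝ p q

theorem convex_segOf (e : Sym2 Pt) : Convex ℝ (segOf e) := by
  induction e with
  | h a b => exact convex_segment a b

/-- `M` is the edge set of a noncrossing straight-line graph on the point set `S`. -/
structure IsPSG (S : Finset Pt) (M : Finset (Sym2 Pt)) : Prop where
  edge : ∀ e ∈ M, ¬e.IsDiag ∧ ∀ p ∈ e, p ∈ S
  noCross : NoCross M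

theorem IsPST.isPSG {S : Finset Pt} {E : Finset (Sym2 Pt)} (hE : IsPST S E) : IsPSG S E :=
  ⟨hE.1, hE.2.1⟩

namespace IsPSG

variable {S : Finset Pt} {M : Finset (Sym2 Pt)} {e f : Sym2 Pt} {a b w : Pt}

theorem mem_of_mem (hM : IsPSG S M) (he : e ∈ M) (ha : a ∈ e) : a ∈ S := (hM.edge e he).2 a ha

theorem left_mem (hM : IsPSG S M) (he : s(a, b) ∈ M) : a ∈ S := hM.mem_of_mem he (by simp)

theorem right_mem (hM : IsPSG S M) (he : s(a, b) ∈ M) : b ∈ S := hM.mem_of_mem he (by simp)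

theorem ne (hM : IsPSG S M) (he : s(a, b) ∈ M) : a ≠ b := by
  simpa using (hM.edge _ he).1

theorem mem_left_of_mem_inter (hM : IsPSG S M) (he : e ∈ M) (hf : f ∈ M) (hef : e ≠ f)
    (hwe : w ∈ segOf e) (hwf : w ∈ segOf f) : w ∈ e :=
  (hM.noCross e he f hf hef ⟨hwe, hwf⟩).1

theorem insert (hM : IsPSG S M) (ha : a ∈ S) (hb : b ∈ S) (hab : a ≠ b)
    (h : ∀ f ∈ M, f ≠ s(a, b) → NoCrossPair s(a, b) f) : IsPSG S (insert s(a, b) M) := by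
  refine ⟨?_, ?_⟩
  · simp only [Finset.forall_mem_insert]
    exact ⟨⟨by simpa, by simp [ha, hb]⟩, hM.edge⟩
  · intro e he f hf hef
    rcases Finset.mem_insert.1 he with rfl | he <;> rcases Finset.mem_insert.1 hf with rfl | hf
    · exact absurd rfl hef
    · exact h f hf hef.symm
    · exact (h e he hef).symm
    · exact hM.noCross e he f hf hef

theorem mono {N : Finset (Sym2 Pt)} (hM : IsPSG S M) (hN : N ⊆ M) : IsPSG S N :=
  ⟨fun e he ↦ hM.edge e (hN he), fun e he f hf ↦ hM.noCross e (hN he) f (hN hf)⟩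

theorem exists_maximal (hM : IsPSG S M) : ∃ N, M ⊆ N ∧ Maximal (IsPSG S) N := by
  have hfin : {N | IsPSG S N}.Finite := (Finset.finite_toSet S.sym2.powerset).subset fun N hN ↦ by
    rw [Finset.mem_coe, Finset.mem_powerset]
    exact fun e he ↦ Finset.mem_sym2_iff.2 (hN.edge e he).2
  exact hfin.exists_le_maximal hM

end IsPSG

theorem mem_of_maximal_isPSG {S : Finset Pt} {M : Finset (Sym2 Pt)} (hM : Maximal (IsPSG S) M)
    {a b : Pt} (ha : a ∈ S) (hb : b ∈ S) (hab : a ≠ b)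
    (h : ∀ f ∈ M, f ≠ s(a, b) → NoCrossPair s(a, b) f) : s(a, b) ∈ M :=
  hM.le_of_ge (hM.prop.insert ha hb hab h) (Finset.subset_insert _ _) (Finset.mem_insert_self _ _)

end PlaneGraph

section EmptyTriangle

/-- No edge in `M` meets the interior of the triangle `p q r`. -/
def IsEmptyTri (M : Finset (Sym2 Pt)) (p q r : Pt) : Prop :=
  ∀ e ∈ M, Disjoint (segOf e) (triInt p q r)

theorem IsEmptyTri.swap_left {M : Finset (Sym2 Pt)} {p q r : Pt} (h : IsEmptyTri M p q r) :
    IsEmptyTri M q p r := fun e he ↦ triInt_swap_left p q r ▸ h e he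

theorem IsEmptyTri.swap_right {M : Finset (Sym2 Pt)} {p q r : Pt} (h : IsEmptyTri M p q r) :
    IsEmptyTri M p r q := fun e he ↦ triInt_swap_right p q r ▸ h e he

/-- Affine coordinates adapted to the edge `p q`: `h` vanishes on its line and measures the distance
from it, and `A` runs along it, from `0` at `q` to a positive value at `p`. -/
structure IsEdgeCoords (p q : Pt) (A h : Pt →ᵃ[ℝ] ℝ) : Prop where
  along_right : A q = 0
  along_left_pos : 0 < A p
  above_left : h p = 0
  above_right : h q = 0
  ext : ∀ v w, A v = A w → h v = h w → v = w

theorem isEdgeCoords_ori {p q : Pt} (hpq : p ≠ q) :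
    IsEdgeCoords p q (ori q (q + (p.2 - q.2, q.1 - p.1))) (ori p q) := by
  have hN : 0 < (p.1 - q.1) ^ 2 + (p.2 - q.2) ^ 2 := by
    by_contra! h
    exact hpq (Prod.ext (by nlinarith) (by nlinarith))
  refine ⟨by simp, ?_, by simp, by simp, fun v w hA hh ↦ ?_⟩
  · rw [ori_apply]
    simp only [Prod.fst_add, Prod.snd_add]
    linarith
  · simp only [ori_apply, Prod.fst_add, Prod.snd_add] at hA hh
    ext <;> refine mul_left_cancel₀ hN.ne' ?_
    · linear_combination (p.1 - q.1) * hA + (p.2 - q.2) * hh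
    · linear_combination (p.2 - q.2) * hA - (p.1 - q.1) * hh

/-- The slope of `A` against `h` along the line through `c` and `d`. -/
def lineSlope (A h : Pt →ᵃ[ℝ] ℝ) (c d : Pt) : ℝ := (A d - A c) / (h d - h c)

/-- The value of `A` where the line through `c` and `d` meets `h = 0`. -/
def lineFoot (A h : Pt →ᵃ[ℝ] ℝ) (c d : Pt) : ℝ := A d - lineSlope A h c d * h d

theorem eq_lineFoot_add_lineSlope_mul {A h : Pt →ᵃ[ℝ] ℝ} {c d w : Pt} (hcd : h c ≠ h d)
    (hw : w ∈ segment ℝ c d) : A w = lineFoot A h c d + lineSlope A h c d * h w := by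
  obtain ⟨x, y, -, -, hxy, rfl⟩ := hw
  have hdc : h d - h c ≠ 0 := sub_ne_zero.2 hcd.symm
  rw [Convex.combo_affine_apply hxy, Convex.combo_affine_apply hxy, lineFoot, lineSlope]
  obtain rfl : x = 1 - y := by linarith
  simp only [smul_eq_mul]
  field_simp
  ring

theorem eq_lineFoot {A h : Pt →ᵃ[ℝ] ℝ} {c d v : Pt} (hcd : h c ≠ h d) (hv : v ∈ segment ℝ c d)
    (hv0 : h v = 0) : A v = lineFoot A h c d := by
  rw [eq_lineFoot_add_lineSlope_mul hcd hv, hv0, mul_zero, add_zero]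

namespace IsEdgeCoords

variable {p q : Pt} {A h : Pt →ᵃ[ℝ] ℝ}

theorem symm (hc : IsEdgeCoords p q A h) :
    IsEdgeCoords q p (AffineMap.const ℝ Pt (A p) - A) h where
  along_right := by simp
  along_left_pos := by simpa [hc.along_right] using hc.along_left_pos
  above_left := hc.above_right
  above_right := hc.above_left
  ext v w hA hh := hc.ext v w (by simpa using hA) hh

theorem mem_openSegment (hc : IsEdgeCoords p q A h) {v : Pt} (hv : h v = 0)
    (hA : A v ∈ Set.Ioo 0 (A p)) : v ∈ openSegment ℝ p q := by
  have hp := hc.along_left_pos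
  have hsum : A v / A p + (1 - A v / A p) = 1 := by ring
  refine ⟨A v / A p, 1 - A v / A p, div_pos hA.1 hp, by rw [sub_pos, div_lt_one hp]; exact hA.2,
    hsum, hc.ext _ _ ?_ ?_⟩
  · rw [Convex.combo_affine_apply hsum, hc.along_right]
    simp [hp.ne']
  · rw [Convex.combo_affine_apply hsum, hc.above_left, hc.above_right, hv]
    simp

variable {S : Finset Pt} {M : Finset (Sym2 Pt)}

theorem along_notMem_Ioo (hc : IsEdgeCoords p q A h) (hM : IsPSG S M) (hpq : s(p, q) ∈ M)
    {a b v : Pt} (he : s(a, b) ∈ M) (hb : h b ≠ 0) (hv : v ∈ segment ℝ a b) (hv0 : h v = 0) :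
    A v ∉ Set.Ioo 0 (A p) := by
  intro hA
  have hne : s(p, q) ≠ s(a, b) := fun heq ↦ by
    have hbpq : b ∈ s(p, q) := heq ▸ Sym2.mem_mk_right a b
    rcases Sym2.mem_iff.1 hbpq with rfl | rfl
    exacts [hb hc.above_left, hb hc.above_right]
  have hvpq := openSegment_subset_segment ℝ p q (hc.mem_openSegment hv0 hA)
  rcases Sym2.mem_iff.1 (hM.mem_left_of_mem_inter hpq he hne hvpq hv) with rfl | rfl
  · exact hA.2.false
  · exact hA.1.ne' hc.along_right

theorem exists_isEmptyTri_of_forall_above (hc : IsEdgeCoords p q A h) (hM : IsPSG S M)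
    (habove : ∀ a b, s(a, b) ∈ M → 0 < h a → 0 < h b) {z : Pt} (hz : z ∈ S) (hz0 : 0 < h z) :
    ∃ r ∈ S, 0 < h r ∧ IsEmptyTri M p q r := by
  obtain ⟨r, hr, hmin⟩ := (S.filter (0 < h ·)).exists_min_image h ⟨z, by simp [hz, hz0]⟩
  simp only [Finset.mem_filter] at hr hmin
  refine ⟨r, hr.1, hr.2, fun e he ↦ Set.disjoint_left.2 fun w hwe hw ↦ ?_⟩
  induction e with | h a b
  have hw0 : 0 < h w := pos_of_mem_triInt h hc.above_left.ge hc.above_right.ge hr.2.le hr.2.ne' hw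
  have hab : 0 < h a ∧ 0 < h b := (pos_or_pos_of_mem_segment h hwe hw0).elim
    (fun ha ↦ ⟨ha, habove a b he ha⟩) fun hb ↦ ⟨habove b a (Sym2.eq_swap ▸ he) hb, hb⟩
  have hwr : 0 < (AffineMap.const ℝ Pt (h r) - h) w := by
    refine pos_of_mem_triInt _ (a := p) ?_ ?_ ?_ ?_ hw <;>
      simp [hc.above_left, hc.above_right, hr.2.le, hr.2.ne']
  rcases pos_or_pos_of_mem_segment _ hwe hwr with h' | h' <;> refine (sub_pos.1 h').not_ge ?_
  · exact hmin a ⟨hM.left_mem he, hab.1⟩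
  · exact hmin b ⟨hM.right_mem he, hab.2⟩

end IsEdgeCoords

/-- The edge `c d` of `M` leaves the line `p q` upwards beyond `p`, and does so closest to `p`; the
slope breaks ties between edges that leave the line at the same point. -/
structure IsNearestExit (M : Finset (Sym2 Pt)) (p : Pt) (A h : Pt →ᵃ[ℝ] ℝ) (c d : Pt) : Prop where
  mem : s(c, d) ∈ M
  below : h c ≤ 0
  above : 0 < h d
  le_foot : A p ≤ lineFoot A h c d
  lex_le : ∀ a b, s(a, b) ∈ M → h a ≤ 0 → 0 < h b → A p ≤ lineFoot A h a b →
    toLex (lineFoot A h c d, lineSlope A h c d) ≤ toLex (lineFoot A h a b, lineSlope A h a b)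

theorem IsPSG.exists_isNearestExit {S : Finset Pt} {M : Finset (Sym2 Pt)} (hM : IsPSG S M)
    {p : Pt} {A h : Pt →ᵃ[ℝ] ℝ} {a b : Pt} (he : s(a, b) ∈ M) (ha : h a ≤ 0) (hb : 0 < h b)
    (hfoot : A p ≤ lineFoot A h a b) : ∃ c d, IsNearestExit M p A h c d := by
  obtain ⟨⟨c, d⟩, hcd, hmin⟩ := ((S ×ˢ S).filter fun x ↦ s(x.1, x.2) ∈ M ∧ h x.1 ≤ 0 ∧ 0 < h x.2 ∧
      A p ≤ lineFoot A h x.1 x.2).exists_min_image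
    (fun x ↦ toLex (lineFoot A h x.1 x.2, lineSlope A h x.1 x.2))
    ⟨(a, b), by simp [hM.left_mem he, hM.right_mem he, he, ha, hb, hfoot]⟩
  obtain ⟨-, hmem, hc, hd, hfoot'⟩ := Finset.mem_filter.1 hcd
  refine ⟨c, d, hmem, hc, hd, hfoot', fun a b he ha hb hf ↦ hmin (a, b) ?_⟩
  simp [hM.left_mem he, hM.right_mem he, he, ha, hb, hf]

/-- The affine function that is positive on the side of the line `c d` containing points with
small `A`. -/
def leftOfLine (A h : Pt →ᵃ[ℝ] ℝ) (c d : Pt) : Pt →ᵃ[ℝ] ℝ :=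
  AffineMap.const ℝ Pt (lineFoot A h c d) + lineSlope A h c d • h - A

theorem leftOfLine_apply (A h : Pt →ᵃ[ℝ] ℝ) (c d w : Pt) :
    leftOfLine A h c d w = lineFoot A h c d + lineSlope A h c d * h w - A w := rfl

theorem leftOfLine_eq_zero {A h : Pt →ᵃ[ℝ] ℝ} {c d w : Pt} (hcd : h c ≠ h d)
    (hw : w ∈ segment ℝ c d) : leftOfLine A h c d w = 0 := by
  rw [leftOfLine_apply, ← eq_lineFoot_add_lineSlope_mul hcd hw, sub_self]

theorem IsEdgeCoords.mem_segment {p q : Pt} {A h : Pt →ᵃ[ℝ] ℝ} (hc : IsEdgeCoords p q A h)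
    {c d v : Pt} (hcv : h c < h v) (hvd : h v < h d) (hv : leftOfLine A h c d v = 0) :
    v ∈ segment ℝ c d := by
  have hcd : 0 < h d - h c := by linarith
  have hsum : (h d - h v) / (h d - h c) + (h v - h c) / (h d - h c) = 1 := by
    field_simp
    ring
  rw [leftOfLine_apply, lineFoot, lineSlope, sub_eq_zero] at hv
  refine ⟨_, _, div_nonneg (sub_nonneg.2 hvd.le) hcd.le, div_nonneg (sub_nonneg.2 hcv.le) hcd.le,
    hsum, hc.ext _ _ ?_ ?_⟩ <;> rw [Convex.combo_affine_apply hsum, smul_eq_mul, smul_eq_mul]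
  · rw [← hv]
    field_simp
    ring
  · field_simp
    ring

namespace IsNearestExit

variable {S : Finset Pt} {M : Finset (Sym2 Pt)} {p q c d : Pt} {A h : Pt →ᵃ[ℝ] ℝ}

theorem foot_pos (hf : IsNearestExit M p A h c d) (hc : IsEdgeCoords p q A h) :
    0 < lineFoot A h c d := hc.along_left_pos.trans_le hf.le_foot

theorem above_ne (hf : IsNearestExit M p A h c d) : h c ≠ h d := (hf.below.trans_lt hf.above).ne

theorem along_nonpos_of_above_eq_zero (hf : IsNearestExit M p A h c d) (hc : IsEdgeCoords p q A h)
    (hM : IsPSG S M) (hpq : s(p, q) ∈ M) {a b v w : Pt} (he : s(a, b) ∈ M)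
    (hw : w ∈ segment ℝ a b) (hv : v ∈ segment ℝ w a) (hw0 : 0 < h w)
    (hwl : 0 < leftOfLine A h c d w) (hv0 : h v = 0) (hvl : 0 ≤ leftOfLine A h c d v) :
    A v ≤ 0 := by
  by_contra! hA
  have hvab : v ∈ segment ℝ a b :=
    (convex_segment a b).segment_subset hw (left_mem_segment ℝ a b) hv
  have ha : h a ≤ 0 := not_lt.1 fun ha ↦ (pos_of_mem_segment h hw0 ha hv).ne' hv0
  have hb : 0 < h b := (pos_or_pos_of_mem_segment h hw hw0).resolve_left ha.not_gt
  have hab : h a ≠ h b := (ha.trans_lt hb).ne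
  have hfoot : A v = lineFoot A h a b := eq_lineFoot hab hvab hv0
  have hpv : A p ≤ A v :=
    not_lt.1 fun h' ↦ hc.along_notMem_Ioo hM hpq he hb.ne' hvab hv0 ⟨hA, h'⟩
  rw [leftOfLine_apply, hv0, mul_zero, add_zero, hfoot] at hvl
  rw [leftOfLine_apply, eq_lineFoot_add_lineSlope_mul (A := A) hab hw] at hwl
  rcases Prod.Lex.toLex_le_toLex.1 (hf.lex_le a b he ha hb (hfoot ▸ hpv)) with hlt | ⟨heq, hle⟩
  · exact hlt.not_ge (sub_nonneg.1 hvl)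
  · have := mul_le_mul_of_nonneg_right hle hw0.le
    dsimp only at heq this
    linarith

theorem le_above_of_mem_inter (hf : IsNearestExit M p A h c d) (hM : IsPSG S M) {g : Sym2 Pt}
    (hg : g ∈ M) {v w : Pt} (hw : w ∈ segOf g) (hwl : leftOfLine A h c d w ≠ 0) (hv : v ∈ segOf g)
    (hvf : v ∈ segOf s(c, d)) (hv0 : 0 < h v) : h d ≤ h v := by
  have hne : s(c, d) ≠ g := by
    rintro rfl
    exact hwl (leftOfLine_eq_zero hf.above_ne hw)
  rcases Sym2.mem_iff.1 (hM.mem_left_of_mem_inter hf.mem hg hne hvf hv) with rfl | rfl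
  · exact absurd hf.below hv0.not_ge
  · exact le_rfl

theorem above_lt_above (hf : IsNearestExit M p A h c d) (hc : IsEdgeCoords p q A h) {v : Pt}
    {k : ℝ} (hv : leftOfLine A h c d v = 0) (hvk : k * h v < A v) (hdk : A d ≤ k * h d) :
    h v < h d := by
  have hfoot := hf.foot_pos hc
  have hd := eq_lineFoot_add_lineSlope_mul (A := A) hf.above_ne (right_mem_segment ℝ c d)
  rw [leftOfLine_apply, sub_eq_zero] at hv
  have hslope : 0 < k - lineSlope A h c d :=
    pos_of_mul_pos_left (b := h d) (by linarith) hf.above.le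
  exact lt_of_mul_lt_mul_left (a := k - lineSlope A h c d) (by linarith) hslope.le

theorem exists_visible (hf : IsNearestExit M p A h c d) (hM : IsPSG S M) :
    ∃ r ∈ S, 0 < h r ∧ 0 ≤ leftOfLine A h c d r ∧
      ∀ s ∈ S, 0 < h s → 0 ≤ leftOfLine A h c d s → A s ≤ A r / h r * h s := by
  obtain ⟨r, hr, hmax⟩ := (S.filter fun r ↦ 0 < h r ∧ 0 ≤ leftOfLine A h c d r).exists_max_image
    (fun r ↦ A r / h r) ⟨d, Finset.mem_filter.2 ⟨hM.right_mem hf.mem, hf.above,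
      (leftOfLine_eq_zero hf.above_ne (right_mem_segment ℝ c d)).ge⟩⟩
  obtain ⟨hrS, hr0, hrl⟩ := Finset.mem_filter.1 hr
  refine ⟨r, hrS, hr0, hrl, fun s hs hs0 hsl ↦ ?_⟩
  exact (div_le_iff₀ hs0).1 (hmax s (Finset.mem_filter.2 ⟨hs, hs0, hsl⟩))

theorem exists_isEmptyTri (hf : IsNearestExit M p A h c d) (hc : IsEdgeCoords p q A h)
    (hM : IsPSG S M) (hpq : s(p, q) ∈ M) : ∃ r ∈ S, 0 < h r ∧ IsEmptyTri M p q r := by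
  obtain ⟨r, hrS, hr0, hrl, hmax⟩ := hf.exists_visible hM
  refine ⟨r, hrS, hr0, fun g hg ↦ Set.disjoint_left.2 fun w hwg hw ↦ ?_⟩
  set k := A r / h r with hk
  have hw0 : 0 < h w := pos_of_mem_triInt h hc.above_left.ge hc.above_right.ge hr0.le hr0.ne' hw
  have hwl : 0 < leftOfLine A h c d w := by
    have hq : 0 < leftOfLine A h c d q := by
      simpa [leftOfLine_apply, hc.above_right, hc.along_right] using hf.foot_pos hc
    refine pos_of_mem_triInt _ ?_ hq.le hrl hq.ne' hw
    simpa [leftOfLine_apply, hc.above_left] using hf.le_foot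
  have hwk : 0 < (A - k • h) w := by
    refine pos_of_mem_triInt _ (a := p) ?_ ?_ ?_ ?_ hw <;>
      simp [hc.above_left, hc.above_right, hc.along_right, hc.along_left_pos.le,
        hc.along_left_pos.ne', hk, hr0.ne']
  obtain ⟨a, b, rfl, hak⟩ : ∃ a b, g = s(a, b) ∧ 0 < (A - k • h) a := by
    induction g with | h a b
    rcases pos_or_pos_of_mem_segment _ hwg hwk with ha | hb
    exacts [⟨a, b, rfl, ha⟩, ⟨b, a, Sym2.eq_swap, hb⟩]
  have ha : ¬(0 < h a ∧ 0 < leftOfLine A h c d a) := fun ha ↦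
    (sub_pos.1 hak).not_ge (hmax a (hM.left_mem hg) ha.1 ha.2.le)
  -- Follow the edge from `w` towards `a` until it leaves the wedge bounded by `p q` and `c d`.
  obtain ⟨v, hv, hv0, hvl, hexit⟩ := exists_mem_segment_nonneg_and_eq_zero _ _ hw0 hwl ha
  have hvk : k * h v < A v := sub_pos.1 (pos_of_mem_segment _ hwk hak hv)
  rcases hv0.eq_or_lt with hv0 | hv0
  · have := hf.along_nonpos_of_above_eq_zero hc hM hpq hg hwg hv hw0 hwl hv0.symm hvl
    rw [← hv0, mul_zero] at hvk
    exact hvk.not_ge this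
  · have hvl := hexit.resolve_left hv0.ne'
    have hvd : h v < h d := hf.above_lt_above hc hvl hvk <| hmax d (hM.right_mem hf.mem) hf.above
      (leftOfLine_eq_zero hf.above_ne (right_mem_segment ℝ c d)).ge
    have hvg := (convex_segOf _).segment_subset hwg (mem_segOf_of_mem (Sym2.mem_mk_left a b)) hv
    exact hvd.not_ge (hf.le_above_of_mem_inter hM hg hwg hwl.ne' hvg
      (hc.mem_segment (hf.below.trans_lt hv0) hvd hvl) hv0)

end IsNearestExit

theorem IsEdgeCoords.exists_isEmptyTri {S : Finset Pt} {M : Finset (Sym2 Pt)} {p q : Pt}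
    {A h : Pt →ᵃ[ℝ] ℝ} (hc : IsEdgeCoords p q A h) (hM : IsPSG S M) (hpq : s(p, q) ∈ M) {z : Pt}
    (hz : z ∈ S) (hz0 : 0 < h z) : ∃ r ∈ S, 0 < h r ∧ IsEmptyTri M p q r := by
  by_cases habove : ∀ a b, s(a, b) ∈ M → 0 < h a → 0 < h b
  · exact hc.exists_isEmptyTri_of_forall_above hM habove hz hz0
  push Not at habove
  obtain ⟨b, a, he, hb, ha⟩ := habove
  rw [Sym2.eq_swap] at he
  obtain ⟨v, hv, hv0⟩ : ∃ v ∈ segment ℝ a b, h v = 0 :=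
    (convex_segment a b).isPreconnected.intermediate_value (left_mem_segment ℝ a b)
      (right_mem_segment ℝ a b) h.continuous_of_finiteDimensional.continuousOn ⟨ha, hb.le⟩
  have hab := (ha.trans_lt hb).ne
  rcases le_or_gt (A p) (A v) with hpv | hvp
  · obtain ⟨c, d, hf⟩ := hM.exists_isNearestExit he ha hb (eq_lineFoot hab hv hv0 ▸ hpv)
    exact hf.exists_isEmptyTri hc hM hpq
  · have hvq : A v ≤ 0 :=
      not_lt.1 fun h' ↦ hc.along_notMem_Ioo hM hpq he hb.ne' hv hv0 ⟨h', hvp⟩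
    have hqv : (AffineMap.const ℝ Pt (A p) - A) q ≤ (AffineMap.const ℝ Pt (A p) - A) v := by
      simpa [hc.along_right] using hvq
    obtain ⟨c, d, hf⟩ := hM.exists_isNearestExit he ha hb (eq_lineFoot hab hv hv0 ▸ hqv)
    obtain ⟨r, hr, hr0, hempty⟩ := hf.exists_isEmptyTri hc.symm hM (Sym2.eq_swap ▸ hpq)
    exact ⟨r, hr, hr0, hempty.swap_left⟩

theorem exists_isEmptyTri {S : Finset Pt} {M : Finset (Sym2 Pt)} (hM : IsPSG S M) {p q z : Pt}
    (hpq : s(p, q) ∈ M) (hz : z ∈ S) (hpqz : 0 < ori p q z) :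
    ∃ r ∈ S, 0 < ori p q r ∧ IsEmptyTri M p q r :=
  (isEdgeCoords_ori (hM.ne hpq)).exists_isEmptyTri hM hpq hz hpqz

end EmptyTriangle

section Connectivity

variable {V : Type*}

/-- `a` and `b` are joined by a path of edges in `E`. -/
abbrev Linked (E : Finset (Sym2 V)) : V → V → Prop :=
  Relation.ReflTransGen fun a b ↦ s(a, b) ∈ E

namespace Linked

variable {E F : Finset (Sym2 V)} {a b p q : V}

theorem symm (h : Linked E a b) : Linked E b a :=
  have : Std.Symm fun a b ↦ s(a, b) ∈ E := ⟨fun _ _ h ↦ Sym2.eq_swap ▸ h⟩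
  symm_of _ h

theorem mono (hEF : E ⊆ F) (h : Linked E a b) : Linked F a b :=
  Relation.ReflTransGen.mono (fun _ _ h ↦ hEF h) _ _ h

theorem of_mem (h : s(a, b) ∈ E) : Linked E a b := Relation.ReflTransGen.single h

theorem erase_or_erase [DecidableEq V] (h : Linked E p a) :
    Linked (E.erase s(p, q)) p a ∨ Linked (E.erase s(p, q)) q a := by
  induction h with
  | refl => exact .inl .refl
  | @tail b c _ hbc ih =>
    by_cases heq : s(b, c) = s(p, q)
    · rcases Sym2.eq_iff.1 heq with ⟨-, rfl⟩ | ⟨-, rfl⟩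
      exacts [.inr .refl, .inl .refl]
    · have hmem : s(b, c) ∈ E.erase s(p, q) := Finset.mem_erase.2 ⟨heq, hbc⟩
      exact ih.imp (·.tail hmem) (·.tail hmem)

end Linked

theorem card_le_card_edges_add_one {S : Finset V} {E : Finset (Sym2 V)}
    (hES : ∀ e ∈ E, ∀ a ∈ e, a ∈ S) (hS : S.Nonempty)
    (hE : ∀ a ∈ S, ∀ b ∈ S, Linked E a b) : S.card ≤ E.card + 1 := by
  let G := SimpleGraph.fromEdgeSet (E : Set (Sym2 V))
  let i := SimpleGraph.Embedding.comap (Function.Embedding.subtype (· ∈ S)) G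
  have hreach : ∀ (a : S) (b : V), Linked E a b →
      ∃ hb : b ∈ S, (G.comap (Subtype.val : S → V)).Reachable a ⟨b, hb⟩ := by
    intro a b h
    induction h with
    | refl => exact ⟨a.2, .refl _⟩
    | @tail b c _ hbc ih =>
      obtain ⟨hb, ih⟩ := ih
      refine ⟨hES _ hbc c (by simp), ih.trans ?_⟩
      rcases eq_or_ne b c with rfl | hne
      · rfl
      · exact SimpleGraph.Adj.reachable ((SimpleGraph.fromEdgeSet_adj _).2 ⟨hbc, hne⟩)
  have : Nonempty S := hS.to_subtype
  have hconn : (G.comap (Subtype.val : S → V)).Connected :=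
    ⟨fun a b ↦ (hreach a b (hE a a.2 b b.2)).2⟩
  have hedges : Nat.card (G.comap (Subtype.val : S → V)).edgeSet ≤ E.card := by
    have hsub : G.edgeSet ⊆ E := SimpleGraph.edgeSet_fromEdgeSet _ ▸ Set.sdiff_subset
    calc Nat.card (G.comap (Subtype.val : S → V)).edgeSet
        ≤ Nat.card (E : Set (Sym2 V)) := Nat.card_le_card_of_injective _
          ((Set.inclusion_injective hsub).comp i.mapEdgeSet.injective)
      _ = E.card := by simp
  simpa using hconn.card_vert_le_card_edgeSet_add_one.trans (Nat.add_le_add_right hedges 1)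

end Connectivity

section Exchange

variable {S : Finset Pt} {M E : Finset (Sym2 Pt)} {p q r : Pt}

theorem IsPST.card_edges_add_one (hE : IsPST S E) : E.card + 1 = S.card := hE.2.2.1

theorem IsPST.linked (hE : IsPST S E) (hp : p ∈ S) (hq : q ∈ S) : Linked E p q :=
  hE.2.2.2 p hp q hq

theorem IsPST.not_linked_erase (hE : IsPST S E) (he : s(p, q) ∈ E) :
    ¬Linked (E.erase s(p, q)) p q := by
  intro hpq
  have hp : p ∈ S := hE.isPSG.left_mem he
  have hlink : ∀ a ∈ S, Linked (E.erase s(p, q)) p a := fun a ha ↦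
    (hE.linked hp ha).erase_or_erase.elim id hpq.trans
  have hle := card_le_card_edges_add_one (S := S)
    (fun e he ↦ (hE.1 e (Finset.mem_of_mem_erase he)).2) ⟨p, hp⟩
    fun a ha b hb ↦ (hlink a ha).symm.trans (hlink b hb)
  have hlt := Finset.card_erase_lt_of_mem he
  have hcard := hE.card_edges_add_one
  omega

theorem IsPST.exchange (hE : IsPST S E) (hM : IsPSG S M) (hEM : E ⊆ M) (he : s(p, q) ∈ E)
    (hpr : s(p, r) ∈ M) (hrq : r ≠ q) (hqr : Linked (E.erase s(p, q)) q r) :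
    s(p, r) ∉ E ∧ IsPST S (insert s(p, r) (E.erase s(p, q))) := by
  have hnot : s(p, r) ∉ E := fun hprE ↦ hE.not_linked_erase he <|
    (Linked.of_mem (Finset.mem_erase.2 ⟨Sym2.congr_right.not.2 hrq, hprE⟩)).trans hqr.symm
  have hp : p ∈ S := hE.isPSG.left_mem he
  set F := insert s(p, r) (E.erase s(p, q)) with hF
  have hsub : E.erase s(p, q) ⊆ F := Finset.subset_insert _ _
  have hFM : IsPSG S F := hM.mono (Finset.insert_subset hpr ((Finset.erase_subset _ _).trans hEM))
  have hpq : Linked F p q :=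
    (Linked.of_mem (Finset.mem_insert_self _ _)).trans (hqr.mono hsub).symm
  have hlink : ∀ a ∈ S, Linked F p a := fun a ha ↦
    (hE.linked hp ha).erase_or_erase.elim (·.mono hsub) fun h ↦ hpq.trans (h.mono hsub)
  refine ⟨hnot, hFM.edge, hFM.noCross, ?_, fun a ha b hb ↦ (hlink a ha).symm.trans (hlink b hb)⟩
  rw [hF, Finset.card_insert_of_notMem fun h ↦ hnot (Finset.mem_of_mem_erase h),
    Finset.card_erase_add_one he]
  exact hE.card_edges_add_one

theorem EmptyTriRot.symm {E₁ E₂ : Finset (Sym2 Pt)} (h : EmptyTriRot S E₁ E₂) :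
    EmptyTriRot S E₂ E₁ := by
  obtain ⟨h₁, h₂, p, q, r, hout, hin, hempty⟩ := h
  exact ⟨h₂, h₁, p, r, q, hin, hout, fun g hg ↦
    triInt_swap_right p q r ▸ hempty g (Finset.union_comm E₁ E₂ ▸ hg)⟩

theorem IsPST.emptyTriRot_exchange (hE : IsPST S E) (hM : IsPSG S M) (hEM : E ⊆ M)
    (hempty : IsEmptyTri M p q r) (he : s(p, q) ∈ E) (hpr : s(p, r) ∈ M) (hrq : r ≠ q)
    (hqr : Linked (E.erase s(p, q)) q r) :
    EmptyTriRot S E (insert s(p, r) (E.erase s(p, q))) := by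
  obtain ⟨hnot, hF⟩ := hE.exchange hM hEM he hpr hrq hqr
  have hne : s(p, q) ≠ s(p, r) := Sym2.congr_right.not.2 hrq.symm
  refine ⟨hE, hF, p, q, r, ?_, ?_, fun g hg ↦ hempty g ?_⟩
  · ext e
    simp only [Finset.mem_sdiff, Finset.mem_insert, Finset.mem_erase, Finset.mem_singleton]
    grind
  · ext e
    simp only [Finset.mem_sdiff, Finset.mem_insert, Finset.mem_erase, Finset.mem_singleton]
    grind
  · simp only [Finset.mem_union, Finset.mem_insert, Finset.mem_erase] at hg
    grind

theorem IsPST.exists_emptyTriRot (hE : IsPST S E) (hM : IsPSG S M) (hEM : E ⊆ M)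
    (hempty : IsEmptyTri M p q r) (he : s(p, q) ∈ E) (hpr : s(p, r) ∈ M) (hqr : s(q, r) ∈ M) :
    ∃ f ∈ ({s(p, r), s(q, r)} : Finset (Sym2 Pt)),
      EmptyTriRot S E (insert f (E.erase s(p, q))) := by
  have hlink := hE.linked (hE.isPSG.left_mem he) (hM.right_mem hpr)
  rcases hlink.erase_or_erase (q := q) with hpr' | hqr'
  · rw [Sym2.eq_swap] at he hpr'
    have := hE.emptyTriRot_exchange hM hEM hempty.swap_left he hqr (hM.ne hpr).symm hpr'
    exact ⟨s(q, r), by simp, Sym2.eq_swap (a := p) ▸ this⟩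
  · exact ⟨s(p, r), by simp, hE.emptyTriRot_exchange hM hEM hempty he hpr (hM.ne hqr).symm hqr'⟩

end Exchange

section ReachesIn

variable {α : Type*} {step : α → α → Prop} {m m' : ℕ} {x y z : α}

namespace ReachesIn

theorem refl (x : α) : ReachesIn step 0 x x :=
  ⟨0, le_rfl, fun _ ↦ x, rfl, rfl, fun _ hi ↦ absurd hi (Nat.not_lt_zero _)⟩

theorem mono (h : ReachesIn step m x y) (hm : m ≤ m') : ReachesIn step m' x y :=
  let ⟨k, hk, hf⟩ := h
  ⟨k, hk.trans hm, hf⟩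

theorem head (hxy : step x y) (h : ReachesIn step m y z) : ReachesIn step (m + 1) x z := by
  obtain ⟨k, hk, f, rfl, rfl, hf⟩ := h
  refine ⟨k + 1, by omega, fun i ↦ Nat.casesOn i x f, rfl, rfl, fun i hi ↦ ?_⟩
  cases i with
  | zero => exact hxy
  | succ i => exact hf i (by omega)

theorem trans (h : ReachesIn step m x y) (h' : ReachesIn step m' y z) :
    ReachesIn step (m + m') x z := by
  obtain ⟨k, hk, f, rfl, rfl, hf⟩ := h
  suffices ∀ j ≤ k, ReachesIn step (j + m') (f (k - j)) z by
    simpa using (this k le_rfl).mono (Nat.add_le_add_right hk m')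
  intro j
  induction j with
  | zero => simpa using h'
  | succ j ih =>
    intro hj
    have hstep := hf (k - (j + 1)) (by omega)
    rw [show k - (j + 1) + 1 = k - j by omega] at hstep
    exact ((ih (by omega)).head hstep).mono (by omega)

theorem symm (hs : ∀ x y, step x y → step y x) (h : ReachesIn step m x y) :
    ReachesIn step m y x := by
  obtain ⟨k, hk, f, rfl, rfl, hf⟩ := h
  refine ⟨k, hk, fun i ↦ f (k - i), by simp, by simp, fun i hi ↦ hs _ _ ?_⟩
  have hstep := hf (k - (i + 1)) (by omega)
  rwa [show k - (i + 1) + 1 = k - i by omega] at hstep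

theorem map {β : Type*} {step' : β → β → Prop} (g : α → β)
    (hg : ∀ x y, step x y → step' (g x) (g y)) (h : ReachesIn step m x y) :
    ReachesIn step' m (g x) (g y) := by
  obtain ⟨k, hk, f, rfl, rfl, hf⟩ := h
  exact ⟨k, hk, g ∘ f, rfl, rfl, fun i hi ↦ hg _ _ (hf i hi)⟩

end ReachesIn

end ReachesIn

section CleanSide

variable {S : Finset Pt} {M : Finset (Sym2 Pt)}

theorem GenPos.mem_of_mem_segment (hS : GenPos S) {a c d : Pt} (ha : a ∈ S) (hc : c ∈ S)
    (hd : d ∈ S) (hcd : c ≠ d) (h : a ∈ segment ℝ c d) : a ∈ s(c, d) :=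
  Sym2.mem_iff.2 (hS.eq_or_eq_of_ori_eq_zero hc hd ha hcd (ori_eq_zero_of_mem_segment h))

theorem GenPos.exists_mem_openSegment_of_not_noCrossPair (hS : GenPos S) {a b c d : Pt}
    (ha : a ∈ S) (hb : b ∈ S) (hab : a ≠ b) (hc : c ∈ S) (hd : d ∈ S) (hcd : c ≠ d)
    (hcross : ¬NoCrossPair s(a, b) s(c, d)) :
    ∃ w ∈ openSegment ℝ a b, w ∈ openSegment ℝ c d := by
  obtain ⟨w, ⟨hab_w, hcd_w⟩, hw⟩ := Set.not_subset.1 hcross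
  have hw_ne : ∀ x ∈ S, w ≠ x := by
    rintro _ hx rfl
    exact hw ⟨hS.mem_of_mem_segment hx ha hb hab hab_w, hS.mem_of_mem_segment hx hc hd hcd hcd_w⟩
  exact ⟨w, mem_openSegment_of_ne_left_right (hw_ne a ha).symm (hw_ne b hb).symm hab_w,
    mem_openSegment_of_ne_left_right (hw_ne c hc).symm (hw_ne d hd).symm hcd_w⟩

theorem GenPos.exists_pos_of_not_noCrossPair (hS : GenPos S) {a b : Pt} {f : Sym2 Pt}
    (ha : a ∈ S) (hb : b ∈ S) (hab : a ≠ b) (hf : ¬f.IsDiag ∧ ∀ p ∈ f, p ∈ S) (hne : f ≠ s(a, b))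
    (hcross : ¬NoCrossPair s(a, b) f) :
    ∃ w ∈ openSegment ℝ a b, w ∈ segOf f ∧ ∃ x ∈ f, 0 < ori a b x := by
  obtain ⟨hdiag, hfS⟩ := hf
  induction f with | h c d =>
  have hcd : c ≠ d := by simpa using hdiag
  have hc : c ∈ S := hfS c (by simp)
  have hd : d ∈ S := hfS d (by simp)
  obtain ⟨w, hw, hw'⟩ :=
    hS.exists_mem_openSegment_of_not_noCrossPair ha hb hab hc hd hcd hcross
  refine ⟨w, hw, openSegment_subset_segment _ _ _ hw', ?_⟩
  by_contra! hle
  have hzero := ori_eq_zero_of_mem_segment (openSegment_subset_segment _ _ _ hw)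
  obtain ⟨x, y, hx, hy, hxy, rfl⟩ := hw'
  rw [ori_combo _ _ hxy] at hzero
  have hc0 : ori a b c = 0 := by nlinarith [hle c (by simp), hle d (by simp)]
  have hd0 : ori a b d = 0 := by nlinarith [hle c (by simp), hle d (by simp)]
  rcases hS.eq_or_eq_of_ori_eq_zero ha hb hc hab hc0 with rfl | rfl <;>
    rcases hS.eq_or_eq_of_ori_eq_zero ha hb hd hab hd0 with rfl | rfl <;>
    simp_all [Sym2.eq_swap]

-- A crossing edge would, just behind the crossing point, run through the triangle.
theorem IsEmptyTri.noCrossPair_side {p q r : Pt} {f : Sym2 Pt} (hempty : IsEmptyTri M p q r)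
    (hS : GenPos S) (hM : IsPSG S M) (hp : p ∈ S) (hr : r ∈ S) (hpos : 0 < ori p q r)
    (hf : f ∈ M) (hne : f ≠ s(r, p)) : NoCrossPair s(r, p) f := by
  by_contra hcross
  have hrp : r ≠ p := by rintro rfl; simp at hpos
  obtain ⟨w, hw, hwf, x, hx, hxpos⟩ :=
    hS.exists_pos_of_not_noCrossPair hr hp hrp (hM.edge f hf) hne hcross
  have hw0 := ori_eq_zero_of_mem_segment (openSegment_subset_segment _ _ _ hw)
  have hpq : 0 < ori p q w := by
    obtain ⟨y, z, hy, -, hyz, rfl⟩ := hw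
    simpa [ori_combo _ _ hyz] using mul_pos hy hpos
  have hqr : 0 < ori q r w := by
    obtain ⟨y, z, -, hz, hyz, rfl⟩ := hw
    simpa [ori_combo _ _ hyz, ori_rotate] using mul_pos hz hpos
  have hnear : ∀ a b : Pt, 0 < ori a b w →
      ∀ᶠ θ : ℝ in nhdsWithin 0 (Set.Ioi 0), 0 < ori a b (AffineMap.lineMap w x θ) := by
    intro a b h
    have hcont : Continuous fun θ : ℝ ↦ ori a b (AffineMap.lineMap w x θ) :=
      (ori a b).continuous_of_finiteDimensional.comp AffineMap.lineMap_continuous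
    exact (hcont.tendsto' 0 _ (by simp)).eventually (lt_mem_nhds h) |>.filter_mono
      nhdsWithin_le_nhds
  obtain ⟨θ, hθpq, hθqr, hθ⟩ := ((hnear p q hpq).and ((hnear q r hqr).and
    (Ioo_mem_nhdsGT (zero_lt_one' ℝ)))).exists
  have hθrp : 0 < ori r p (AffineMap.lineMap w x θ) := by
    rw [AffineMap.apply_lineMap, hw0, AffineMap.lineMap_apply_ring, mul_zero, zero_add]
    exact mul_pos hθ.1 hxpos
  exact Set.disjoint_left.1 (hempty f hf)
    ((convex_segOf f).lineMap_mem hwf (mem_segOf_of_mem hx) ⟨hθ.1.le, hθ.2.le⟩)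
    (mem_triInt_of_ori_pos hθpq hθqr hθrp)

theorem IsEmptyTri.rotate {p q r : Pt} (h : IsEmptyTri M p q r) : IsEmptyTri M r p q :=
  h.swap_right.swap_left

theorem exists_isEmptyTri_of_maximal (hS : GenPos S) (hM : Maximal (IsPSG S) M) {p q z : Pt}
    (hpq : s(p, q) ∈ M) (hz : z ∈ S) (hpos : 0 < ori p q z) :
    ∃ r, 0 < ori p q r ∧ s(p, r) ∈ M ∧ s(q, r) ∈ M ∧ IsEmptyTri M p q r := by
  obtain ⟨r, hr, hr_pos, hempty⟩ := exists_isEmptyTri hM.prop hpq hz hpos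
  have hp := hM.prop.left_mem hpq
  have hq := hM.prop.right_mem hpq
  have hrp : r ≠ p := by rintro rfl; simp at hr_pos
  have hqr : q ≠ r := by rintro rfl; simp at hr_pos
  refine ⟨r, hr_pos, ?_, ?_, hempty⟩
  · rw [Sym2.eq_swap]
    exact mem_of_maximal_isPSG hM hr hp hrp fun f hf hne ↦
      hempty.noCrossPair_side hS hM.prop hp hr hr_pos hf hne
  · refine mem_of_maximal_isPSG hM hq hr hqr fun f hf hne ↦
      hempty.rotate.noCrossPair_side hS hM.prop hr hq ?_ hf hne
    rwa [← ori_rotate]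

end CleanSide

section Split

theorem exists_notMem_card_filter_lt_eq {α : Type*} [LinearOrder α] [DenselyOrdered α]
    {T : Finset α} {k : ℕ} (hk : 0 < k) (hkT : k < T.card) :
    ∃ c ∉ T, (T.filter (· < c)).card = k := by
  let e := T.orderEmbOfFin rfl
  obtain ⟨c, hlt, hgt⟩ := exists_between <| e.strictMono <|
    show (⟨k - 1, by lia⟩ : Fin T.card) < ⟨k, hkT⟩ from Fin.mk_lt_mk.2 (by lia)
  have hbelow : ∀ i : Fin T.card, i < ⟨k, hkT⟩ → e i < c := fun i hi ↦
    (e.monotone (Fin.le_def.2 (Nat.le_sub_one_of_lt hi))).trans_lt hlt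
  have habove : ∀ i : Fin T.card, ⟨k, hkT⟩ ≤ i → c < e i := fun i hi ↦
    hgt.trans_le (e.monotone hi)
  have hT : T = Finset.univ.map e.toEmbedding := (T.map_orderEmbOfFin_univ rfl).symm
  refine ⟨c, fun hc ↦ ?_, ?_⟩
  · obtain ⟨i, -, rfl⟩ := Finset.mem_map.1 (hT ▸ hc)
    exact (lt_or_ge i ⟨k, hkT⟩).elim (fun h ↦ (hbelow i h).false) fun h ↦ (habove i h).false
  · have hfilter : T.filter (· < c) = (Finset.Iio ⟨k, hkT⟩).map e.toEmbedding := by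
      conv_lhs => rw [hT]
      rw [Finset.filter_map]
      congr 1
      ext i
      simpa using ⟨fun h ↦ not_le.1 fun hi ↦ (habove i hi).asymm h, hbelow i⟩
    rw [hfilter, Finset.card_map, Fin.card_Iio]

/-- The abscissa of a point after shearing the plane by `t`. -/
def absc (t : ℝ) : Pt →ₗ[ℝ] ℝ := LinearMap.fst ℝ ℝ ℝ + t • LinearMap.snd ℝ ℝ ℝ

theorem absc_apply (t : ℝ) (p : Pt) : absc t p = p.1 + t * p.2 := rfl

theorem eq_of_absc_eq_of_snd_eq {t : ℝ} {p q : Pt} (h : absc t p = absc t q) (h₂ : p.2 = q.2) :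
    p = q := by
  rw [absc_apply, absc_apply, h₂] at h
  exact Prod.ext (add_right_cancel h) h₂

theorem exists_injOn_absc (S : Finset Pt) : ∃ t, Set.InjOn (absc t) S := by
  have hfin : (⋃ p ∈ S, ⋃ q ∈ S, {t : ℝ | p ≠ q ∧ absc t p = absc t q}).Finite := by
    refine S.finite_toSet.biUnion fun p _ ↦ S.finite_toSet.biUnion fun q _ ↦
      Set.Subsingleton.finite ?_
    rintro x ⟨hpq, hx⟩ y ⟨-, hy⟩
    have hsnd : p.2 - q.2 ≠ 0 := fun h ↦ hpq (eq_of_absc_eq_of_snd_eq hx (sub_eq_zero.1 h))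
    rw [absc_apply, absc_apply] at hx hy
    exact mul_right_cancel₀ hsnd (by linarith)
  obtain ⟨t, ht⟩ := hfin.exists_notMem
  refine ⟨t, fun p hp q hq h ↦ by_contra fun hne ↦ ht ?_⟩
  simp only [Set.mem_iUnion]
  exact ⟨p, hp, q, hq, hne, h⟩

/-- The sheared vertical line at abscissa `c` avoids `S`, and no two points of `S` lie on a
common such line. -/
structure IsSplit (S : Finset Pt) (t c : ℝ) : Prop where
  injOn : Set.InjOn (absc t) S
  ne : ∀ p ∈ S, absc t p ≠ c

theorem exists_isSplit {S : Finset Pt} {k : ℕ} (hk : 0 < k) (hkS : k < S.card) :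
    ∃ t c, IsSplit S t c ∧ (S.filter (absc t · < c)).card = k := by
  obtain ⟨t, ht⟩ := exists_injOn_absc S
  have hcard : (S.image (absc t)).card = S.card := Finset.card_image_of_injOn ht
  obtain ⟨c, hc, hck⟩ := exists_notMem_card_filter_lt_eq hk (hcard.symm ▸ hkS)
  refine ⟨t, c, ⟨ht, fun p hp h ↦ hc (h ▸ Finset.mem_image_of_mem _ hp)⟩, ?_⟩
  rwa [Finset.filter_image, Finset.card_image_of_injOn (ht.mono (Finset.filter_subset _ _))] at hck

theorem IsSplit.filter_union_filter {S : Finset Pt} {t c : ℝ} (hc : IsSplit S t c) :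
    S.filter (absc t · < c) ∪ S.filter (c < absc t ·) = S := by
  rw [← Finset.filter_or, Finset.filter_eq_self]
  exact fun p hp ↦ (hc.ne p hp).lt_or_gt

theorem IsSplit.card_filter_add_card_filter {S : Finset Pt} {t c : ℝ} (hc : IsSplit S t c) :
    (S.filter (absc t · < c)).card + (S.filter (c < absc t ·)).card = S.card := by
  rw [← Finset.card_union_of_disjoint, hc.filter_union_filter]
  exact Finset.disjoint_filter.2 fun _ _ h ↦ h.asymm

end Split

section Height

variable {t c : ℝ} {p q r w : Pt}

/-- The point with abscissa `c` on the line `p q`. -/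
def crossPt (t c : ℝ) (p q : Pt) : Pt :=
  AffineMap.lineMap p q ((c - absc t p) / (absc t q - absc t p))

/-- The ordinate at which the line `p q` passes over the abscissa `c`. -/
def height (t c : ℝ) (p q : Pt) : ℝ := (crossPt t c p q).2

theorem absc_crossPt (h : absc t p < absc t q) : absc t (crossPt t c p q) = c := by
  have hne : absc t q - absc t p ≠ 0 := (sub_pos.2 h).ne'
  rw [crossPt, AffineMap.lineMap_apply_module', map_add, map_smul, map_sub, smul_eq_mul,
    div_mul_cancel₀ _ hne, sub_add_cancel]

theorem crossPt_mem_openSegment (hp : absc t p < c) (hq : c < absc t q) :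
    crossPt t c p q ∈ openSegment ℝ p q := by
  rw [openSegment_eq_image_lineMap]
  have hpos : 0 < absc t q - absc t p := sub_pos.2 (hp.trans hq)
  exact Set.mem_image_of_mem _
    ⟨div_pos (sub_pos.2 hp) hpos, (div_lt_one hpos).2 (sub_lt_sub_right hq _)⟩

theorem crossPt_mem_segOf (hp : absc t p < c) (hq : c < absc t q) :
    crossPt t c p q ∈ segOf s(p, q) :=
  openSegment_subset_segment _ _ _ (crossPt_mem_openSegment hp hq)

theorem ori_eq_mul_sub_height (h : absc t p < absc t q) (hw : absc t w = c) :
    ori p q w = (absc t q - absc t p) * (w.2 - height t c p q) := by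
  have hne : absc t q - absc t p ≠ 0 := (sub_pos.2 h).ne'
  have hheight : (absc t q - absc t p) * (height t c p q - p.2)
      = (c - absc t p) * (q.2 - p.2) := by
    rw [height, crossPt, AffineMap.lineMap_apply_module']
    simp only [Prod.snd_add, Prod.smul_snd, Prod.snd_sub, smul_eq_mul]
    field_simp
    ring
  subst hw
  simp only [absc_apply] at hheight ⊢
  rw [ori_apply]
  linear_combination hheight

theorem ori_pos_iff_height_lt (h : absc t p < absc t q) (hw : absc t w = c) :
    0 < ori p q w ↔ height t c p q < w.2 := by
  rw [ori_eq_mul_sub_height h hw, mul_pos_iff_of_pos_left (sub_pos.2 h), sub_pos]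

theorem ori_neg_iff_lt_height (h : absc t p < absc t q) (hw : absc t w = c) :
    ori p q w < 0 ↔ w.2 < height t c p q := by
  rw [ori_eq_mul_sub_height h hw, ← smul_eq_mul, smul_neg_iff_of_pos_left (sub_pos.2 h), sub_neg]

theorem height_lt_height_left (hp : absc t p < c) (hq : c < absc t q) (hr : absc t r < c)
    (hpos : 0 < ori p q r) : height t c p q < height t c r q := by
  refine (ori_neg_iff_lt_height (hr.trans hq) (absc_crossPt (hp.trans hq))).1 ?_
  obtain ⟨x, y, hx, -, hxy, hw⟩ := crossPt_mem_openSegment hp hq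
  rw [← hw, ori_combo _ _ hxy, ori_self_right, ori_swap, ori_rotate]
  nlinarith

theorem height_lt_height_right (hp : absc t p < c) (hq : c < absc t q) (hr : c < absc t r)
    (hpos : 0 < ori p q r) : height t c p q < height t c p r := by
  refine (ori_neg_iff_lt_height (hp.trans hr) (absc_crossPt (hp.trans hq))).1 ?_
  obtain ⟨x, y, -, hy, hxy, hw⟩ := crossPt_mem_openSegment hp hq
  rw [← hw, ori_combo _ _ hxy, ori_self_left, ori_swap, ← ori_rotate]
  nlinarith

theorem IsPSG.eq_and_eq_of_height_eq {S : Finset Pt} {M : Finset (Sym2 Pt)} (hM : IsPSG S M)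
    {p' q' : Pt} (hp : absc t p < c) (hq : c < absc t q) (hp' : absc t p' < c)
    (hq' : c < absc t q') (he : s(p, q) ∈ M) (he' : s(p', q') ∈ M)
    (hheight : height t c p q = height t c p' q') : p = p' ∧ q = q' := by
  have habsc : absc t (crossPt t c p q) = c := absc_crossPt (hp.trans hq)
  have hcross : crossPt t c p q = crossPt t c p' q' :=
    eq_of_absc_eq_of_snd_eq (habsc.trans (absc_crossPt (hp'.trans hq')).symm) hheight
  have heq : s(p, q) = s(p', q') := by
    by_contra hne
    have hmem := hM.mem_left_of_mem_inter he he' hne (crossPt_mem_segOf hp hq)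
      (hcross ▸ crossPt_mem_segOf hp' hq')
    rcases Sym2.mem_iff.1 hmem with h | h <;> rw [h] at habsc
    exacts [hp.ne habsc, hq.ne' habsc]
  rcases Sym2.eq_iff.1 heq with h | ⟨rfl, -⟩
  exacts [h, absurd hp hq'.asymm]

end Height

section Bridge

/-- `l r` is the upper hull edge of `S` over the abscissa `c`: the highest of the segments that
join a point of `S` left of the line to a point of `S` right of it. -/
structure IsBridge (S : Finset Pt) (t c : ℝ) (l r : Pt) : Prop where
  left_mem : l ∈ S
  right_mem : r ∈ S
  left_lt : absc t l < c
  lt_right : c < absc t r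
  height_le : ∀ p ∈ S, absc t p < c → ∀ q ∈ S, c < absc t q → height t c p q ≤ height t c l r

variable {S : Finset Pt} {M : Finset (Sym2 Pt)} {t c : ℝ} {l r : Pt}

theorem exists_isBridge {p q : Pt} (hp : p ∈ S) (hpc : absc t p < c) (hq : q ∈ S)
    (hqc : c < absc t q) : ∃ l r, IsBridge S t c l r := by
  obtain ⟨⟨l, r⟩, hlr, hmax⟩ :=
    (S.filter (absc t · < c) ×ˢ S.filter (c < absc t ·)).exists_max_image
      (fun x ↦ height t c x.1 x.2) ⟨(p, q), by simp [*]⟩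
  simp only [Finset.mem_product, Finset.mem_filter] at hlr hmax
  exact ⟨l, r, hlr.1.1, hlr.2.1, hlr.1.2, hlr.2.2,
    fun p hp hpc q hq hqc ↦ hmax (p, q) ⟨⟨hp, hpc⟩, hq, hqc⟩⟩

namespace IsBridge

theorem ne (hlr : IsBridge S t c l r) : l ≠ r := by
  rintro rfl
  exact hlr.left_lt.asymm hlr.lt_right

theorem ori_nonpos (hlr : IsBridge S t c l r) (hc : IsSplit S t c) {s : Pt} (hs : s ∈ S) :
    ori l r s ≤ 0 := by
  by_contra! hpos
  rcases (hc.ne s hs).lt_or_gt with hsc | hsc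
  · exact (hlr.height_le s hs hsc r hlr.right_mem hlr.lt_right).not_gt
      (height_lt_height_left hlr.left_lt hlr.lt_right hsc hpos)
  · exact (hlr.height_le l hlr.left_mem hlr.left_lt s hs hsc).not_gt
      (height_lt_height_right hlr.left_lt hlr.lt_right hsc hpos)

theorem noCrossPair (hlr : IsBridge S t c l r) (hc : IsSplit S t c) (hS : GenPos S)
    {f : Sym2 Pt} (hf : ¬f.IsDiag ∧ ∀ p ∈ f, p ∈ S) (hne : f ≠ s(l, r)) :
    NoCrossPair s(l, r) f := by
  by_contra hcross
  obtain ⟨-, -, -, x, hx, hpos⟩ :=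
    hS.exists_pos_of_not_noCrossPair hlr.left_mem hlr.right_mem hlr.ne hf hne hcross
  exact (hlr.ori_nonpos hc (hf.2 x hx)).not_gt hpos

theorem mem_of_maximal (hlr : IsBridge S t c l r) (hc : IsSplit S t c) (hS : GenPos S)
    (hM : Maximal (IsPSG S) M) : s(l, r) ∈ M :=
  mem_of_maximal_isPSG hM hlr.left_mem hlr.right_mem hlr.ne fun f hf hne ↦
    hlr.noCrossPair hc hS (hM.prop.edge f hf) hne

end IsBridge

/-- The edges of `M` crossing the line at abscissa `c`, each written from left to right. -/
def crossing (t c : ℝ) (S : Finset Pt) (M : Finset (Sym2 Pt)) : Finset (Pt × Pt) :=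
  (S ×ˢ S).filter fun x ↦ absc t x.1 < c ∧ c < absc t x.2 ∧ s(x.1, x.2) ∈ M

theorem mem_crossing {p q : Pt} (hM : IsPSG S M) :
    (p, q) ∈ crossing t c S M ↔ absc t p < c ∧ c < absc t q ∧ s(p, q) ∈ M := by
  simp only [crossing, Finset.mem_filter, Finset.mem_product, and_iff_right_iff_imp]
  exact fun h ↦ ⟨hM.left_mem h.2.2, hM.right_mem h.2.2⟩

theorem crossing_mono {M' : Finset (Sym2 Pt)} (h : M ⊆ M') :
    crossing t c S M ⊆ crossing t c S M' :=
  Finset.monotone_filter_right _ fun _ _ hx ↦ ⟨hx.1, hx.2.1, h hx.2.2⟩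

theorem IsBridge.exists_isEmptyTri (hlr : IsBridge S t c l r) (hc : IsSplit S t c)
    (hS : GenPos S) (hM : Maximal (IsPSG S) M) {p q : Pt}
    (hpq : (p, q) ∈ (crossing t c S M).erase (l, r)) :
    ∃ v, 0 < ori p q v ∧ s(p, v) ∈ M ∧ s(q, v) ∈ M ∧ IsEmptyTri M p q v := by
  obtain ⟨hne, hpq⟩ := Finset.mem_erase.1 hpq
  obtain ⟨hp, hq, he⟩ := (mem_crossing hM.prop).1 hpq
  have hlt : height t c p q < height t c l r :=
    (hlr.height_le p (hM.prop.left_mem he) hp q (hM.prop.right_mem he) hq).lt_of_ne fun h ↦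
      hne <| Prod.ext_iff.2 <| hM.prop.eq_and_eq_of_height_eq hp hq hlr.left_lt hlr.lt_right he
        (hlr.mem_of_maximal hc hS hM) h
  have hpos : 0 < ori p q (crossPt t c l r) :=
    (ori_pos_iff_height_lt (hp.trans hq) (absc_crossPt (hlr.left_lt.trans hlr.lt_right))).2 hlt
  rcases pos_or_pos_of_mem_segment _ (crossPt_mem_segOf hlr.left_lt hlr.lt_right) hpos with h | h
  · exact exists_isEmptyTri_of_maximal hS hM he hlr.left_mem h
  · exact exists_isEmptyTri_of_maximal hS hM he hlr.right_mem h

end Bridge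

section Charging

/-- The edge `a b` of `M` and the point `v` span an empty nondegenerate triangle in which `v` is
the middle vertex, that is, its abscissa lies between those of `a` and `b`. -/
structure IsMidTri (t : ℝ) (M : Finset (Sym2 Pt)) (a b v : Pt) : Prop where
  edge_mem : s(a, b) ∈ M
  left_lt : absc t a < absc t v
  lt_right : absc t v < absc t b
  ori_ne_zero : ori a b v ≠ 0
  isEmptyTri : IsEmptyTri M a b v

variable {S : Finset Pt} {M : Finset (Sym2 Pt)} {t c : ℝ} {a b a' b' v l r : Pt}

theorem mem_openSegment_of_absc_eq {x w : Pt} (hx : absc t x = absc t v)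
    (hw : absc t w = absc t v) (h : w.2 ∈ openSegment ℝ x.2 v.2) : w ∈ openSegment ℝ x v := by
  obtain ⟨y, z, hy, hz, hyz, hsnd⟩ := h
  refine ⟨y, z, hy, hz, hyz, eq_of_absc_eq_of_snd_eq (t := t) ?_ hsnd⟩
  rw [map_add, map_smul, map_smul, hx, hw, ← add_smul, hyz, one_smul]

namespace IsMidTri

theorem ori_pos_iff (h : IsMidTri t M a b v) :
    0 < ori a b v ↔ height t (absc t v) a b < v.2 :=
  ori_pos_iff_height_lt (h.left_lt.trans h.lt_right) rfl

theorem ori_neg_iff (h : IsMidTri t M a b v) :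
    ori a b v < 0 ↔ v.2 < height t (absc t v) a b :=
  ori_neg_iff_lt_height (h.left_lt.trans h.lt_right) rfl

theorem height_notMem_openSegment (h : IsMidTri t M a b v) (h' : IsMidTri t M a' b' v) :
    height t (absc t v) a' b' ∉ openSegment ℝ (height t (absc t v) a b) v.2 := fun hmem ↦
  Set.disjoint_left.1 (h.isEmptyTri _ h'.edge_mem) (crossPt_mem_segOf h'.left_lt h'.lt_right) <|
    mem_triInt_of_mem_openSegment h.ori_ne_zero (crossPt_mem_openSegment h.left_lt h.lt_right) <|
      mem_openSegment_of_absc_eq (absc_crossPt (h.left_lt.trans h.lt_right))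
        (absc_crossPt (h'.left_lt.trans h'.lt_right)) hmem

-- Of two edges facing `v` from the same side, the one nearer to `v` would pass through the
-- triangle of the other.
theorem eq_and_eq (hM : IsPSG S M) (h : IsMidTri t M a b v) (h' : IsMidTri t M a' b' v)
    (hside : 0 < ori a b v ↔ 0 < ori a' b' v) : a = a' ∧ b = b' := by
  refine hM.eq_and_eq_of_height_eq h.left_lt h.lt_right h'.left_lt h'.lt_right h.edge_mem
    h'.edge_mem (by_contra fun hne ↦ ?_)
  have hnot := h.height_notMem_openSegment h'
  have hnot' := h'.height_notMem_openSegment h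
  rcases h.ori_ne_zero.lt_or_gt with hneg | hpos
  · have hneg' : ori a' b' v < 0 :=
      h'.ori_ne_zero.lt_of_le (not_lt.1 fun hpos' ↦ hneg.not_gt (hside.2 hpos'))
    rw [openSegment_symm, openSegment_eq_Ioo (h.ori_neg_iff.1 hneg)] at hnot
    rw [openSegment_symm, openSegment_eq_Ioo (h'.ori_neg_iff.1 hneg')] at hnot'
    exact (lt_or_gt_of_ne hne).elim (fun hlt ↦ hnot' ⟨h.ori_neg_iff.1 hneg, hlt⟩)
      fun hgt ↦ hnot ⟨h'.ori_neg_iff.1 hneg', hgt⟩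
  · rw [openSegment_eq_Ioo (h.ori_pos_iff.1 hpos)] at hnot
    rw [openSegment_eq_Ioo (h'.ori_pos_iff.1 (hside.1 hpos))] at hnot'
    exact (lt_or_gt_of_ne hne).elim (fun hlt ↦ hnot ⟨hlt, h'.ori_pos_iff.1 (hside.1 hpos)⟩)
      fun hgt ↦ hnot' ⟨hgt, h.ori_pos_iff.1 hpos⟩

end IsMidTri

/-- The edge `x` is charged to the middle vertex of its upper triangle. In `above` this is the
third vertex of the triangle, and `x` is the long edge below it; in `left` and `right` it is an
endpoint of `x`, below the long edge. -/
inductive IsCharged (t : ℝ) (M : Finset (Sym2 Pt)) : Pt × Pt → Pt × Bool → Prop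
  | above {a b v : Pt} : IsMidTri t M a b v → 0 < ori a b v → IsCharged t M (a, b) (v, true)
  | left {a b v : Pt} : IsMidTri t M a b v → ori a b v < 0 → IsCharged t M (v, b) (v, false)
  | right {a b v : Pt} : IsMidTri t M a b v → ori a b v < 0 → IsCharged t M (a, v) (v, false)

theorem IsCharged.eq {x x' : Pt × Pt} {y : Pt × Bool} (hM : IsPSG S M)
    (hx : x ∈ crossing t c S M) (hx' : x' ∈ crossing t c S M) (h : IsCharged t M x y)
    (h' : IsCharged t M x' y) : x = x' := by
  have hlt := (mem_crossing hM).1 hx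
  have hlt' := (mem_crossing hM).1 hx'
  cases h with
  | above hmid hpos =>
    cases h' with
    | above hmid' hpos' =>
      exact Prod.ext_iff.2 (hmid.eq_and_eq hM hmid' (iff_of_true hpos hpos'))
  | left hmid hneg =>
    cases h' with
    | left hmid' hneg' =>
      exact congrArg _ (hmid.eq_and_eq hM hmid' (iff_of_false hneg.not_gt hneg'.not_gt)).2
    | right => exact absurd hlt.1 hlt'.2.1.asymm
  | right hmid hneg =>
    cases h' with
    | left => exact absurd hlt'.1 hlt.2.1.asymm
    | right hmid' hneg' =>
      exact congrArg (·, _) (hmid.eq_and_eq hM hmid' (iff_of_false hneg.not_gt hneg'.not_gt)).1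

theorem IsBridge.exists_isCharged (hlr : IsBridge S t c l r) (hc : IsSplit S t c)
    (hS : GenPos S) (hM : Maximal (IsPSG S) M) {x : Pt × Pt}
    (hx : x ∈ (crossing t c S M).erase (l, r)) :
    ∃ y ∈ S ×ˢ Finset.univ, IsCharged t M x y := by
  obtain ⟨p, q⟩ := x
  obtain ⟨v, hpos, hpv, hqv, hempty⟩ := hlr.exists_isEmptyTri hc hS hM hx
  obtain ⟨hp, hq, he⟩ := (mem_crossing hM.prop).1 (Finset.mem_of_mem_erase hx)
  have hpS := hM.prop.left_mem hpv
  have hqS := hM.prop.left_mem hqv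
  have hvS := hM.prop.right_mem hpv
  have hneg : ori v q p < 0 := by rwa [ori_swap, ori_rotate, neg_lt_zero]
  have hneg' : ori p v q < 0 := by rwa [ori_swap, ← ori_rotate, neg_lt_zero]
  simp only [Finset.mem_product, Finset.mem_univ, and_true]
  rcases lt_trichotomy (absc t p) (absc t v) with hpv_lt | hpv_eq | hvp_lt
  · rcases lt_trichotomy (absc t v) (absc t q) with hvq_lt | hvq_eq | hqv_lt
    · exact ⟨_, hvS, .above ⟨he, hpv_lt, hvq_lt, hpos.ne', hempty⟩ hpos⟩
    · exact absurd (hc.injOn hvS hqS hvq_eq).symm (hM.prop.ne hqv)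
    · exact ⟨_, hqS, .right ⟨hpv, hp.trans hq, hqv_lt, hneg'.ne, hempty.swap_right⟩ hneg'⟩
  · exact absurd (hc.injOn hpS hvS hpv_eq) (hM.prop.ne hpv)
  · exact ⟨_, hpS, .left ⟨Sym2.eq_swap ▸ hqv, hvp_lt, hp.trans hq, hneg.ne,
      hempty.rotate.swap_right⟩ hneg⟩

theorem IsBridge.card_crossing_erase_le (hlr : IsBridge S t c l r) (hc : IsSplit S t c)
    (hS : GenPos S) (hM : Maximal (IsPSG S) M) :
    ((crossing t c S M).erase (l, r)).card ≤ 2 * S.card := by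
  calc ((crossing t c S M).erase (l, r)).card
      ≤ (S ×ˢ (Finset.univ : Finset Bool)).card :=
        Finset.card_le_card_of_forall_subsingleton (IsCharged t M)
          (fun _ hx ↦ hlr.exists_isCharged hc hS hM hx) fun _ _ _ hx _ hx' ↦
            hx.2.eq hM.prop (Finset.mem_of_mem_erase hx.1) (Finset.mem_of_mem_erase hx'.1) hx'.2
    _ = 2 * S.card := by rw [Finset.card_product, Finset.card_univ, Fintype.card_bool, mul_comm]

end Charging

section Sweep

variable {S : Finset Pt} {M E : Finset (Sym2 Pt)} {t c : ℝ} {l r : Pt}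

theorem height_lt_height_of_mem_upper_sides {p q v : Pt} {x : Pt × Pt} (hp : absc t p < c)
    (hq : c < absc t q) (hpos : 0 < ori p q v) (hx : absc t x.1 < c) (hx' : c < absc t x.2)
    (hside : s(x.1, x.2) ∈ ({s(p, v), s(q, v)} : Finset (Sym2 Pt))) :
    height t c p q < height t c x.1 x.2 := by
  obtain ⟨x₁, x₂⟩ := x
  simp only [Finset.mem_insert, Finset.mem_singleton, Sym2.eq_iff] at hside
  rcases hside with (⟨rfl, rfl⟩ | ⟨rfl, rfl⟩) | ⟨rfl, rfl⟩ | ⟨rfl, rfl⟩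
  · exact height_lt_height_right hp hq hx' hpos
  · exact absurd hp hx'.asymm
  · exact absurd hx hq.asymm
  · exact height_lt_height_left hp hq hx hpos

theorem IsBridge.exists_emptyTriRot_of_lowest (hlr : IsBridge S t c l r) (hc : IsSplit S t c)
    (hS : GenPos S) (hM : Maximal (IsPSG S) M) (hE : IsPST S E) (hEM : E ⊆ M) {x : Pt × Pt}
    (hx : x ∈ (crossing t c S E).erase (l, r))
    (hlow : ∀ z ∈ (crossing t c S E).erase (l, r), height t c x.1 x.2 ≤ height t c z.1 z.2) :
    ∃ E' ⊆ M, EmptyTriRot S E E' ∧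
      ∀ z ∈ (crossing t c S E').erase (l, r), height t c x.1 x.2 < height t c z.1 z.2 := by
  obtain ⟨p, q⟩ := x
  obtain ⟨v, hpos, hpv, hqv, hempty⟩ :=
    hlr.exists_isEmptyTri hc hS hM (Finset.erase_subset_erase _ (crossing_mono hEM) hx)
  obtain ⟨hp, hq, he⟩ := (mem_crossing hE.isPSG).1 (Finset.mem_of_mem_erase hx)
  obtain ⟨f, hf, hrot⟩ := hE.exists_emptyTriRot hM.prop hEM hempty he hpv hqv
  have hfM : f ∈ M := by
    rcases Finset.mem_insert.1 hf with rfl | hf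
    exacts [hpv, Finset.mem_singleton.1 hf ▸ hqv]
  refine ⟨_, Finset.insert_subset hfM ((Finset.erase_subset _ _).trans hEM), hrot, ?_⟩
  rintro ⟨z₁, z₂⟩ hz
  obtain ⟨hz_ne, hz⟩ := Finset.mem_erase.1 hz
  obtain ⟨hz₁, hz₂, hz_mem⟩ := (mem_crossing hrot.2.1.isPSG).1 hz
  rcases Finset.mem_insert.1 hz_mem with rfl | hz_old
  · exact height_lt_height_of_mem_upper_sides hp hq hpos hz₁ hz₂ hf
  · obtain ⟨hne, hzE⟩ := Finset.mem_erase.1 hz_old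
    refine (hlow _ <| Finset.mem_erase.2
      ⟨hz_ne, (mem_crossing hE.isPSG).2 ⟨hz₁, hz₂, hzE⟩⟩).lt_of_ne fun heq ↦ hne ?_
    obtain ⟨h₁, h₂⟩ := hE.isPSG.eq_and_eq_of_height_eq hp hq hz₁ hz₂ he hzE heq
    rw [h₁, h₂]

-- `U` is the set of edges that the sweep may still rotate.
theorem IsBridge.exists_reachesIn_of_forall_mem (hlr : IsBridge S t c l r) (hc : IsSplit S t c)
    (hS : GenPos S) (hM : Maximal (IsPSG S) M) (U : Finset (Pt × Pt)) (hE : IsPST S E)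
    (hEM : E ⊆ M)
    (hU : ∀ x ∈ (crossing t c S E).erase (l, r), ∀ z ∈ (crossing t c S M).erase (l, r),
      height t c x.1 x.2 ≤ height t c z.1 z.2 → z ∈ U) :
    ∃ E', IsPST S E' ∧ (crossing t c S E').erase (l, r) = ∅ ∧
      ReachesIn (EmptyTriRot S) U.card E E' := by
  induction U using Finset.strongInduction generalizing E with | H U ih =>
  rcases ((crossing t c S E).erase (l, r)).eq_empty_or_nonempty with hnone | hsome
  · exact ⟨E, hE, hnone, (ReachesIn.refl E).mono (Nat.zero_le _)⟩
  obtain ⟨x, hx, hlow⟩ := Finset.exists_min_image _ (fun x ↦ height t c x.1 x.2) hsome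
  obtain ⟨E₁, hE₁M, hrot, habove⟩ := hlr.exists_emptyTriRot_of_lowest hc hS hM hE hEM hx hlow
  have hxU : x ∈ U := hU x hx x (Finset.erase_subset_erase _ (crossing_mono hEM) hx) le_rfl
  have hU₁ : ∀ y ∈ (crossing t c S E₁).erase (l, r), ∀ z ∈ (crossing t c S M).erase (l, r),
      height t c y.1 y.2 ≤ height t c z.1 z.2 → z ∈ U.erase x := by
    intro y hy z hz hyz
    have hxz := (habove y hy).trans_le hyz
    exact Finset.mem_erase.2 ⟨fun h ↦ (h ▸ hxz).false, hU x hx z hz hxz.le⟩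
  obtain ⟨E', hE', hnone, hreach⟩ :=
    ih (U.erase x) (Finset.erase_ssubset hxU) hrot.2.1 hE₁M hU₁
  refine ⟨E', hE', hnone, ?_⟩
  rw [← Finset.card_erase_add_one hxU]
  exact hreach.head hrot

theorem IsBridge.exists_reachesIn_crossing_erase_eq_empty (hlr : IsBridge S t c l r)
    (hc : IsSplit S t c) (hS : GenPos S) (hE : IsPST S E) :
    ∃ E', IsPST S E' ∧ (crossing t c S E').erase (l, r) = ∅ ∧
      ReachesIn (EmptyTriRot S) (2 * S.card) E E' := by
  obtain ⟨M, hEM, hM⟩ := hE.isPSG.exists_maximal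
  obtain ⟨E', hE', hnone, hreach⟩ :=
    hlr.exists_reachesIn_of_forall_mem hc hS hM _ hE hEM fun _ _ _ hz _ ↦ hz
  exact ⟨E', hE', hnone, hreach.mono (hlr.card_crossing_erase_le hc hS hM)⟩

end Sweep

section Bridged

theorem segOf_subset_convexHull {U : Finset Pt} {e : Sym2 Pt} (he : ∀ p ∈ e, p ∈ U) :
    segOf e ⊆ convexHull ℝ (U : Set Pt) := by
  induction e with
  | h a b =>
    exact (convex_convexHull ℝ _).segment_subset
      (subset_convexHull ℝ _ (he a (by simp))) (subset_convexHull ℝ _ (he b (by simp)))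

theorem triInt_subset_convexHull {U : Finset Pt} {p q r : Pt} (hp : p ∈ U) (hq : q ∈ U)
    (hr : r ∈ U) : triInt p q r ⊆ convexHull ℝ (U : Set Pt) :=
  interior_subset.trans (convexHull_mono (by simp [Set.insert_subset_iff, hp, hq, hr]))

/-- `S` is the union of two sets `U` and `V` with disjoint convex hulls, joined by an edge `uv`
that crosses no other edge on `S` and meets the interior of no triangle on `S`. -/
structure IsBridged (S U V : Finset Pt) (u v : Pt) : Prop where
  left_mem : u ∈ U
  right_mem : v ∈ V
  union_eq : U ∪ V = S
  disjoint_convexHull : Disjoint (convexHull ℝ (U : Set Pt)) (convexHull ℝ (V : Set Pt))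
  noCrossPair : ∀ f : Sym2 Pt, ¬f.IsDiag ∧ (∀ p ∈ f, p ∈ S) → f ≠ s(u, v) → NoCrossPair s(u, v) f
  disjoint_triInt : ∀ p ∈ S, ∀ q ∈ S, ∀ r ∈ S, Disjoint (segOf s(u, v)) (triInt p q r)

/-- The graph obtained from `A` and `B` by adding the edge `uv`. -/
def joinAt (u v : Pt) (A B : Finset (Sym2 Pt)) : Finset (Sym2 Pt) := insert s(u, v) (A ∪ B)

theorem joinAt_comm (u v : Pt) (A B : Finset (Sym2 Pt)) : joinAt u v A B = joinAt v u B A := by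
  rw [joinAt, joinAt, Sym2.eq_swap, Finset.union_comm]

/-- The edges of `E` with both endpoints in `U`. -/
def restrict (U : Finset Pt) (E : Finset (Sym2 Pt)) : Finset (Sym2 Pt) :=
  E.filter fun e ↦ ∀ p ∈ e, p ∈ U

theorem mk_mem_restrict {U : Finset Pt} {E : Finset (Sym2 Pt)} {a b : Pt} :
    s(a, b) ∈ restrict U E ↔ s(a, b) ∈ E ∧ a ∈ U ∧ b ∈ U := by
  rw [restrict, Finset.mem_filter, Sym2.ball]

theorem IsPSG.restrict {S U : Finset Pt} {M : Finset (Sym2 Pt)} (hM : IsPSG S M) :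
    IsPSG U (restrict U M) where
  edge _ he := ⟨(hM.edge _ (Finset.filter_subset _ _ he)).1, (Finset.mem_filter.1 he).2⟩
  noCross := (hM.mono (Finset.filter_subset _ _)).noCross

namespace IsBridged

variable {S U V : Finset Pt} {u v : Pt} {A A' B E : Finset (Sym2 Pt)}

theorem symm (h : IsBridged S U V u v) : IsBridged S V U v u where
  left_mem := h.right_mem
  right_mem := h.left_mem
  union_eq := Finset.union_comm U V ▸ h.union_eq
  disjoint_convexHull := h.disjoint_convexHull.symm
  noCrossPair := Sym2.eq_swap (a := u) ▸ h.noCrossPair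
  disjoint_triInt := Sym2.eq_swap (a := u) ▸ h.disjoint_triInt

theorem left_subset (h : IsBridged S U V u v) : U ⊆ S := h.union_eq ▸ Finset.subset_union_left

theorem mem_or_mem (h : IsBridged S U V u v) {p : Pt} (hp : p ∈ S) : p ∈ U ∨ p ∈ V :=
  Finset.mem_union.1 (h.union_eq ▸ hp)

theorem disjoint (h : IsBridged S U V u v) : Disjoint U V :=
  Finset.disjoint_coe.1 <|
    h.disjoint_convexHull.mono (subset_convexHull ℝ _) (subset_convexHull ℝ _)

theorem disjoint_edges (h : IsBridged S U V u v) (hA : IsPSG U A) (hB : IsPSG V B) :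
    Disjoint A B := by
  refine Finset.disjoint_left.2 fun e heA heB ↦ ?_
  have hmem := e.out_fst_mem
  exact Finset.disjoint_left.1 h.disjoint (hA.mem_of_mem heA hmem) (hB.mem_of_mem heB hmem)

theorem bridge_notMem (h : IsBridged S U V u v) (hA : IsPSG U A) : s(u, v) ∉ A := fun he ↦
  Finset.disjoint_left.1 h.disjoint (hA.right_mem he) h.right_mem

theorem bridge_notMem_union (h : IsBridged S U V u v) (hA : IsPSG U A) (hB : IsPSG V B) :
    s(u, v) ∉ A ∪ B :=
  Finset.notMem_union.2 ⟨h.bridge_notMem hA, Sym2.eq_swap ▸ h.symm.bridge_notMem hB⟩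

theorem card_joinAt (h : IsBridged S U V u v) (hA : IsPSG U A) (hB : IsPSG V B) :
    (joinAt u v A B).card = A.card + B.card + 1 := by
  rw [joinAt, Finset.card_insert_of_notMem (h.bridge_notMem_union hA hB),
    Finset.card_union_of_disjoint (h.disjoint_edges hA hB)]

theorem card_eq (h : IsBridged S U V u v) : S.card = U.card + V.card := by
  rw [← h.union_eq, Finset.card_union_of_disjoint h.disjoint]

theorem isPSG_union (h : IsBridged S U V u v) (hA : IsPSG U A) (hB : IsPSG V B) :
    IsPSG S (A ∪ B) := by
  have hAB : ∀ e ∈ A, ∀ f ∈ B, NoCrossPair e f := fun e he f hf w hw ↦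
    (Set.disjoint_left.1 h.disjoint_convexHull (segOf_subset_convexHull (hA.edge e he).2 hw.1)
      (segOf_subset_convexHull (hB.edge f hf).2 hw.2)).elim
  refine ⟨fun e he ↦ ?_, fun e he f hf hef ↦ ?_⟩
  · rcases Finset.mem_union.1 he with he | he
    · exact ⟨(hA.edge e he).1, fun p hp ↦ h.left_subset (hA.mem_of_mem he hp)⟩
    · exact ⟨(hB.edge e he).1, fun p hp ↦ h.symm.left_subset (hB.mem_of_mem he hp)⟩
  · rcases Finset.mem_union.1 he with he | he <;> rcases Finset.mem_union.1 hf with hf | hf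
    · exact hA.noCross e he f hf hef
    · exact hAB e he f hf
    · exact (hAB f hf e he).symm
    · exact hB.noCross e he f hf hef

theorem isPSG_joinAt (h : IsBridged S U V u v) (hA : IsPSG U A) (hB : IsPSG V B) :
    IsPSG S (joinAt u v A B) := by
  have hAB := h.isPSG_union hA hB
  exact hAB.insert (h.left_subset h.left_mem) (h.symm.left_subset h.right_mem)
    (fun huv ↦ Finset.disjoint_left.1 h.disjoint h.left_mem (huv ▸ h.right_mem))
    fun f hf ↦ h.noCrossPair f (hAB.edge f hf)

theorem isPST_joinAt (h : IsBridged S U V u v) (hA : IsPST U A) (hB : IsPST V B) :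
    IsPST S (joinAt u v A B) := by
  have hjoin := h.isPSG_joinAt hA.isPSG hB.isPSG
  have hAsub : A ⊆ joinAt u v A B := Finset.subset_union_left.trans (Finset.subset_insert _ _)
  have hBsub : B ⊆ joinAt u v A B := Finset.subset_union_right.trans (Finset.subset_insert _ _)
  have hlinked : ∀ p ∈ S, Linked (joinAt u v A B) u p := fun p hp ↦ by
    rcases h.mem_or_mem hp with hp | hp
    · exact (hA.linked h.left_mem hp).mono hAsub
    · exact (Linked.of_mem (Finset.mem_insert_self _ _)).trans
        ((hB.linked h.right_mem hp).mono hBsub)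
  refine ⟨hjoin.edge, hjoin.noCross, ?_, fun p hp q hq ↦ (hlinked p hp).symm.trans (hlinked q hq)⟩
  rw [h.card_joinAt hA.isPSG hB.isPSG, h.card_eq, ← hA.card_edges_add_one, ← hB.card_edges_add_one]
  ring

theorem joinAt_sdiff_joinAt (h : IsBridged S U V u v) (hA : IsPSG U A) (hB : IsPSG V B) :
    joinAt u v A B \ joinAt u v A' B = A \ A' := by
  have hdisj : Disjoint A (insert s(u, v) B) :=
    Finset.disjoint_insert_right.2 ⟨h.bridge_notMem hA, h.disjoint_edges hA hB⟩
  have hrw : ∀ A, joinAt u v A B = A ∪ insert s(u, v) B := fun A ↦ (Finset.union_insert _ _ _).symm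
  rw [hrw, hrw, Finset.union_sdiff_distrib, Finset.sdiff_eq_empty_iff_subset.2
    Finset.subset_union_right, Finset.union_empty, Finset.union_comm, ← Finset.sup_eq_union,
    ← sdiff_sdiff_left, hdisj.sdiff_eq_left]

theorem emptyTriRot_joinAt (h : IsBridged S U V u v) (hB : IsPST V B) (hrot : EmptyTriRot U A A') :
    EmptyTriRot S (joinAt u v A B) (joinAt u v A' B) := by
  obtain ⟨hA, hA', p, q, r, hremoved, hadded, hempty⟩ := hrot
  have hpq : s(p, q) ∈ A := (Finset.mem_sdiff.1 (hremoved ▸ Finset.mem_singleton_self _)).1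
  have hpr : s(p, r) ∈ A' := (Finset.mem_sdiff.1 (hadded ▸ Finset.mem_singleton_self _)).1
  have hp := hA.isPSG.left_mem hpq
  have hq := hA.isPSG.right_mem hpq
  have hr := hA'.isPSG.right_mem hpr
  refine ⟨h.isPST_joinAt hA hB, h.isPST_joinAt hA' hB, p, q, r, ?_, ?_, fun g hg ↦ ?_⟩
  · rw [h.joinAt_sdiff_joinAt hA.isPSG hB.isPSG, hremoved]
  · rw [h.joinAt_sdiff_joinAt hA'.isPSG hB.isPSG, hadded]
  have hg' : g = s(u, v) ∨ g ∈ B ∨ g ∈ A ∪ A' := by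
    simp only [joinAt, Finset.mem_union, Finset.mem_insert] at hg ⊢
    tauto
  rcases hg' with rfl | hgB | hgA
  · exact h.disjoint_triInt p (h.left_subset hp) q (h.left_subset hq) r (h.left_subset hr)
  · exact h.disjoint_convexHull.symm.mono (segOf_subset_convexHull (hB.isPSG.edge g hgB).2)
      (triInt_subset_convexHull hp hq hr)
  · exact hempty g hgA

theorem linked_restrict (h : IsBridged S U V u v) (hE : IsPST S E)
    (hcut : ∀ p ∈ U, ∀ q ∈ V, s(p, q) ∈ E → p = u ∧ q = v) {p q : Pt} (hp : p ∈ U) (hq : q ∈ U) :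
    Linked (restrict U E) p q := by
  -- Each excursion of a path into `V` leaves and re-enters `U` at `u`.
  have hpath : ∀ x, Linked E p x →
      x ∈ U ∧ Linked (restrict U E) p x ∨ x ∈ V ∧ Linked (restrict U E) p u := by
    intro x hpx
    induction hpx with
    | refl => exact .inl ⟨hp, .refl⟩
    | @tail b c _ hbc ih =>
      rcases ih with ⟨hb, ih⟩ | ⟨hb, ih⟩ <;>
        rcases h.mem_or_mem (hE.isPSG.right_mem hbc) with hc | hc
      · exact .inl ⟨hc, ih.tail (mk_mem_restrict.2 ⟨hbc, hb, hc⟩)⟩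
      · obtain ⟨rfl, rfl⟩ := hcut b hb c hc hbc
        exact .inr ⟨hc, ih⟩
      · obtain ⟨rfl, rfl⟩ := hcut c hc b hb (Sym2.eq_swap ▸ hbc)
        exact .inl ⟨hc, ih⟩
      · exact .inr ⟨hc, ih⟩
  rcases hpath q (hE.linked (h.left_subset hp) (h.left_subset hq)) with hq' | hq'
  · exact hq'.2
  · exact (Finset.disjoint_left.1 h.disjoint hq hq'.1).elim

theorem bridge_mem (h : IsBridged S U V u v) (hE : IsPST S E)
    (hcut : ∀ p ∈ U, ∀ q ∈ V, s(p, q) ∈ E → p = u ∧ q = v) : s(u, v) ∈ E := by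
  by_contra hbridge
  have hU : ∀ x, Linked E u x → x ∈ U := by
    intro x hux
    induction hux with
    | refl => exact h.left_mem
    | @tail b c _ hbc hb =>
      refine (h.mem_or_mem (hE.isPSG.right_mem hbc)).resolve_right fun hc ↦ ?_
      obtain ⟨rfl, rfl⟩ := hcut b hb c hc hbc
      exact hbridge hbc
  have hv := hE.linked (h.left_subset h.left_mem) (h.symm.left_subset h.right_mem)
  exact Finset.disjoint_left.1 h.disjoint (hU v hv) h.right_mem

theorem joinAt_restrict (h : IsBridged S U V u v) (hE : IsPST S E)
    (hcut : ∀ p ∈ U, ∀ q ∈ V, s(p, q) ∈ E → p = u ∧ q = v) :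
    joinAt u v (restrict U E) (restrict V E) = E := by
  apply Finset.Subset.antisymm
  · exact Finset.insert_subset (h.bridge_mem hE hcut)
      (Finset.union_subset (Finset.filter_subset _ _) (Finset.filter_subset _ _))
  intro e he
  induction e with
  | h a b =>
    rw [joinAt, Finset.mem_insert, Finset.mem_union, mk_mem_restrict, mk_mem_restrict]
    rcases h.mem_or_mem (hE.isPSG.left_mem he) with ha | ha <;>
      rcases h.mem_or_mem (hE.isPSG.right_mem he) with hb | hb
    · exact .inr (.inl ⟨he, ha, hb⟩)
    · obtain ⟨rfl, rfl⟩ := hcut a ha b hb he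
      exact .inl rfl
    · obtain ⟨rfl, rfl⟩ := hcut b hb a ha (Sym2.eq_swap ▸ he)
      exact .inl Sym2.eq_swap
    · exact .inr (.inr ⟨he, ha, hb⟩)

theorem isPST_restrict (h : IsBridged S U V u v) (hE : IsPST S E)
    (hcut : ∀ p ∈ U, ∀ q ∈ V, s(p, q) ∈ E → p = u ∧ q = v) : IsPST U (restrict U E) := by
  have hU : IsPSG U (restrict U E) := hE.isPSG.restrict
  have hV : IsPSG V (restrict V E) := hE.isPSG.restrict
  have hcut' : ∀ p ∈ V, ∀ q ∈ U, s(p, q) ∈ E → p = v ∧ q = u := fun p hp q hq he ↦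
    (hcut q hq p hp (Sym2.eq_swap ▸ he)).symm
  have hlinked : ∀ p ∈ U, ∀ q ∈ U, Linked (restrict U E) p q := fun _ hp _ hq ↦
    h.linked_restrict hE hcut hp hq
  have hcardU := card_le_card_edges_add_one (fun e he ↦ (hU.edge e he).2) ⟨u, h.left_mem⟩ hlinked
  have hcardV := card_le_card_edges_add_one (fun e he ↦ (hV.edge e he).2) ⟨v, h.right_mem⟩
    fun _ hp _ hq ↦ h.symm.linked_restrict hE hcut' hp hq
  have hcardE := h.card_joinAt hU hV
  rw [h.joinAt_restrict hE hcut] at hcardE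
  exact ⟨hU.edge, hU.noCross, by linarith [hE.card_edges_add_one, h.card_eq], hlinked⟩

end IsBridged

theorem exists_ori_ne_zero {a b : Pt} (hab : a ≠ b) : ∃ c, ori a b c ≠ 0 := by
  refine ⟨(a.1 - (b.2 - a.2), a.2 + (b.1 - a.1)), fun h ↦ hab ?_⟩
  rw [ori_apply] at h
  ext <;> nlinarith [sq_nonneg (b.1 - a.1), sq_nonneg (b.2 - a.2)]

theorem IsBridge.disjoint_triInt {S : Finset Pt} {t c : ℝ} {l r : Pt} (hlr : IsBridge S t c l r)
    (hc : IsSplit S t c) {p q s : Pt} (hp : p ∈ S) (hq : q ∈ S) (hs : s ∈ S) :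
    Disjoint (segOf s(l, r)) (triInt p q s) := by
  have hnonneg : ∀ x ∈ S, 0 ≤ ori r l x := fun x hx ↦ by
    rw [ori_swap, neg_nonneg]
    exact hlr.ori_nonpos hc hx
  refine Set.disjoint_left.2 fun w hw hw' ↦ ?_
  obtain ⟨a, ha⟩ := exists_ori_ne_zero hlr.ne.symm
  have hpos := pos_of_mem_triInt (ori r l) (hnonneg p hp) (hnonneg q hq) (hnonneg s hs) ha hw'
  rw [ori_eq_zero_of_mem_segment (segment_symm ℝ l r ▸ hw)] at hpos
  exact hpos.false

theorem IsBridge.isBridged {S : Finset Pt} {t c : ℝ} {l r : Pt} (hlr : IsBridge S t c l r)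
    (hc : IsSplit S t c) (hS : GenPos S) :
    IsBridged S (S.filter (absc t · < c)) (S.filter (c < absc t ·)) l r where
  left_mem := Finset.mem_filter.2 ⟨hlr.left_mem, hlr.left_lt⟩
  right_mem := Finset.mem_filter.2 ⟨hlr.right_mem, hlr.lt_right⟩
  union_eq := hc.filter_union_filter
  disjoint_convexHull := by
    have hleft : convexHull ℝ (S.filter (absc t · < c) : Set Pt) ⊆ {w | absc t w < c} :=
      convexHull_min (by simp +contextual [Set.subset_def])
        (convex_halfSpace_lt (absc t).isLinear c)
    have hright : convexHull ℝ (S.filter (c < absc t ·) : Set Pt) ⊆ {w | c < absc t w} :=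
      convexHull_min (by simp +contextual [Set.subset_def])
        (convex_halfSpace_gt (absc t).isLinear c)
    exact Set.disjoint_left.2 fun w hwl hwr ↦
      lt_asymm (a := absc t w) (hleft hwl) (hright hwr)
  noCrossPair f hf hne := hlr.noCrossPair hc hS hf hne
  disjoint_triInt p hp q hq s hs := hlr.disjoint_triInt hc hp hq hs

end Bridged

section Recursion

variable {S : Finset Pt} {E : Finset (Sym2 Pt)}

theorem GenPos.mono {U : Finset Pt} (hS : GenPos S) (hU : U ⊆ S) : GenPos U :=
  fun p hp q hq r hr ↦ hS p (hU hp) q (hU hq) r (hU hr)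

theorem isPST_singleton_iff {p : Pt} : IsPST {p} E ↔ E = ∅ := by
  refine ⟨fun hE ↦ ?_, ?_⟩
  · simpa using hE.card_edges_add_one
  · rintro rfl
    refine ⟨by simp, by simp [NoCross], by simp, fun a ha b hb ↦ ?_⟩
    rw [Finset.mem_singleton.1 ha, Finset.mem_singleton.1 hb]

theorem IsBridged.reachesIn_joinAt {U V : Finset Pt} {u v : Pt} {A A' B B' : Finset (Sym2 Pt)}
    {m m' : ℕ} (h : IsBridged S U V u v) (hA' : IsPST U A') (hB : IsPST V B)
    (hA : ReachesIn (EmptyTriRot U) m A A') (hBB' : ReachesIn (EmptyTriRot V) m' B B') :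
    ReachesIn (EmptyTriRot S) (m + m') (joinAt u v A B) (joinAt u v A' B') := by
  refine (hA.map (joinAt u v · B) fun _ _ ↦ h.emptyTriRot_joinAt hB).trans
    (hBB'.map (joinAt u v A') fun C D hCD ↦ ?_)
  rw [joinAt_comm u v A' C, joinAt_comm u v A' D]
  exact h.symm.emptyTriRot_joinAt hA' hCD

theorem eq_of_crossing_erase_eq_empty {t c : ℝ} {l r : Pt} (hE : IsPSG S E)
    (hnone : (crossing t c S E).erase (l, r) = ∅) {p q : Pt} (hp : absc t p < c)
    (hq : c < absc t q) (hpq : s(p, q) ∈ E) : p = l ∧ q = r := by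
  by_contra hne
  have hmem : (p, q) ∈ (crossing t c S E).erase (l, r) :=
    Finset.mem_erase.2 ⟨fun h ↦ hne (Prod.ext_iff.1 h), (mem_crossing hE).2 ⟨hp, hq, hpq⟩⟩
  simp [hnone] at hmem

theorem IsBridge.exists_reachesIn_joinAt {t c : ℝ} {l r : Pt} (hlr : IsBridge S t c l r)
    (hc : IsSplit S t c) (hS : GenPos S) (hE : IsPST S E) :
    ∃ A B, IsPST (S.filter (absc t · < c)) A ∧ IsPST (S.filter (c < absc t ·)) B ∧
      ReachesIn (EmptyTriRot S) (2 * S.card) E (joinAt l r A B) := by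
  obtain ⟨E', hE', hnone, hreach⟩ := hlr.exists_reachesIn_crossing_erase_eq_empty hc hS hE
  have hbr := hlr.isBridged hc hS
  have hcut : ∀ p ∈ S.filter (absc t · < c), ∀ q ∈ S.filter (c < absc t ·), s(p, q) ∈ E' →
      p = l ∧ q = r := fun p hp q hq ↦
    eq_of_crossing_erase_eq_empty hE'.isPSG hnone (Finset.mem_filter.1 hp).2
      (Finset.mem_filter.1 hq).2
  refine ⟨_, _, hbr.isPST_restrict hE' hcut, hbr.symm.isPST_restrict hE' fun p hp q hq hpq ↦
    (hcut q hq p hp (Sym2.eq_swap ▸ hpq)).symm, ?_⟩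
  rwa [hbr.joinAt_restrict hE' hcut]

theorem add_mul_clog_two_le {k m : ℕ} (hk : 0 < k) (hkm : k ≤ m) (hmk : m ≤ k + 1) :
    k + m + (k * Nat.clog 2 k + m * Nat.clog 2 m) ≤ (k + m) * Nat.clog 2 (k + m) := by
  have hclog : Nat.clog 2 (k + m) = Nat.clog 2 m + 1 := by
    rw [Nat.clog_of_two_le one_lt_two (by omega), show (k + m + 2 - 1) / 2 = m by omega]
  calc k + m + (k * Nat.clog 2 k + m * Nat.clog 2 m)
      ≤ k + m + (k * Nat.clog 2 m + m * Nat.clog 2 m) := by gcongr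
    _ = (k + m) * Nat.clog 2 (k + m) := by rw [hclog]; ring

theorem exists_isPST_forall_reachesIn (hS : GenPos S) (hne : S.Nonempty) :
    ∃ C, IsPST S C ∧ ∀ E, IsPST S E →
      ReachesIn (EmptyTriRot S) (2 * (S.card * Nat.clog 2 S.card)) E C := by
  induction hn : S.card using Nat.strong_induction_on generalizing S with | _ n ih =>
  subst hn
  rcases Nat.lt_or_ge S.card 2 with hlt | hge
  · obtain ⟨p, rfl⟩ := Finset.card_eq_one.1 (Nat.le_antisymm (by omega) hne.card_pos)
    refine ⟨∅, isPST_singleton_iff.2 rfl, fun E hE ↦ ?_⟩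
    rw [isPST_singleton_iff.1 hE]
    exact (ReachesIn.refl ∅).mono (Nat.zero_le _)
  obtain ⟨t, c, hc, hL⟩ := exists_isSplit (S := S) (k := S.card / 2) (by omega) (by omega)
  have hLR := hc.card_filter_add_card_filter
  set L := S.filter (absc t · < c)
  set R := S.filter (c < absc t ·)
  obtain ⟨p, hp⟩ : L.Nonempty := Finset.card_pos.1 (by omega)
  obtain ⟨q, hq⟩ : R.Nonempty := Finset.card_pos.1 (by omega)
  obtain ⟨l, r, hlr⟩ := exists_isBridge (Finset.mem_filter.1 hp).1 (Finset.mem_filter.1 hp).2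
    (Finset.mem_filter.1 hq).1 (Finset.mem_filter.1 hq).2
  have hbr : IsBridged S L R l r := hlr.isBridged hc hS
  obtain ⟨A, hA, hreachA⟩ := ih L.card (by omega) (hS.mono hbr.left_subset) ⟨p, hp⟩ rfl
  obtain ⟨B, hB, hreachB⟩ := ih R.card (by omega) (hS.mono hbr.symm.left_subset) ⟨q, hq⟩ rfl
  refine ⟨joinAt l r A B, hbr.isPST_joinAt hA hB, fun E hE ↦ ?_⟩
  obtain ⟨A', B', hA', hB', hreach⟩ := hlr.exists_reachesIn_joinAt hc hS hE
  refine (hreach.trans (hbr.reachesIn_joinAt hA hB' (hreachA A' hA') (hreachB B' hB'))).mono ?_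
  rw [← hLR]
  linarith [add_mul_clog_two_le (k := L.card) (m := R.card) (by omega) (by omega) (by omega)]

theorem clog_two_mul_log_two_le {n : ℕ} (hn : 2 ≤ n) :
    Nat.clog 2 n * Real.log 2 ≤ 2 * Real.log n := by
  have hpow : (2 : ℝ) ^ (Nat.clog 2 n - 1) ≤ n := by
    exact_mod_cast (Nat.pow_pred_clog_lt_self one_lt_two hn).le
  have hlog : Real.log 2 ≤ Real.log n := Real.log_le_log two_pos (by exact_mod_cast hn)
  have hlogpow := Real.log_le_log (by positivity) hpow
  rw [Real.log_pow, Nat.cast_pred (Nat.clog_pos one_lt_two hn)] at hlogpow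
  linarith

theorem four_mul_mul_clog_two_le {n : ℕ} (hn : 2 ≤ n) :
    (4 * (n * Nat.clog 2 n) : ℝ) ≤ 8 / Real.log 2 * n * Real.log n := by
  calc (4 * (n * Nat.clog 2 n) : ℝ)
      = 4 * n * (Nat.clog 2 n * Real.log 2) / Real.log 2 := by field_simp
    _ ≤ 4 * n * (2 * Real.log n) / Real.log 2 := by
      gcongr ?_ / _
      exact mul_le_mul_of_nonneg_left (clog_two_mul_log_two_le hn) (by positivity)
    _ = 8 / Real.log 2 * n * Real.log n := by ring

end Recursion

/-- any two noncrossing spanning trees on `n` points in general position are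
connected by `O(n log n)` empty-triangle rotations. -/
theorem stmt_3 :
    ∃ c : ℝ, 0 < c ∧ ∀ n : ℕ, 2 ≤ n → ∀ S : Finset Pt, S.card = n → GenPos S →
      ∀ E E' : Finset (Sym2 Pt), IsPST S E → IsPST S E' →
        ∃ m : ℕ, (m : ℝ) ≤ c * n * Real.log n ∧ ReachesIn (EmptyTriRot S) m E E' := by
  refine ⟨8 / Real.log 2, div_pos (by norm_num) (Real.log_pos one_lt_two), ?_⟩
  rintro n hn S rfl hS E E' hE hE'
  obtain ⟨C, -, hreach⟩ := exists_isPST_forall_reachesIn hS (Finset.card_pos.1 (by omega))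
  refine ⟨_, ?_, (hreach E hE).trans ((hreach E' hE').symm fun _ _ ↦ EmptyTriRot.symm)⟩
  push_cast
  linarith [four_mul_mul_clog_two_le hn]
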